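/- Suppose Ideal(c_eq)+QM(c_in) is archimedean and Assumption A holds. If the LICQC, SCC and SOSC hold at every global minimizer of the problem (Q): minimize f_{θ*}(x) := f(x) − Σ_i θ*_i a_i(x) subject to x ∈ K, then the Moment-SOS hierarchy has finite convergence: there exists k0 ∈ ℕ such that ϑ_k = φ_k = ϑ* = φ* for all k ≥ k0. -/

import Mathlib

open MvPolynomial MeasureTheory

noncomputable section

/-- The space of real polynomials in `n` variables. -/
abbrev RPoly (n : ℕ) : Type := MvPolynomial (Fin n) ℝ

/-- The degree `|α|` of a monomial power `α`. -/
def mdeg {n : ℕ} (α : Fin n →₀ ℕ) : ℕ := ∑ i, α i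

/-- `p` is a sum of squares of polynomials. -/
def IsSOS {n : ℕ} (p : RPoly n) : Prop :=
  ∃ L : List (RPoly n), p = (L.map (fun q => q ^ 2)).sum

/-- The truncation `QM(g)_k` of the quadratic module generated by `(g j)_{j ∈ S}`. -/
def QModDeg {n : ℕ} {κ : Type} (S : Finset κ) (g : κ → RPoly n) (k : ℕ) :
    Set (RPoly n) :=
  {p | ∃ σ0 : RPoly n, ∃ σ : κ → RPoly n,
      IsSOS σ0 ∧ σ0.totalDegree ≤ k ∧
      (∀ j ∈ S, IsSOS (σ j) ∧ (σ j).totalDegree + (g j).totalDegree ≤ k) ∧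
      p = σ0 + ∑ j ∈ S, g j * σ j}

/-- The truncation `Ideal(h)_k` of the ideal generated by `(h j)_{j ∈ S}`. -/
def IdealDeg {n : ℕ} {ι : Type} (S : Finset ι) (h : ι → RPoly n) (k : ℕ) :
    Set (RPoly n) :=
  {p | ∃ q : ι → RPoly n,
      (∀ j ∈ S, (q j).totalDegree + (h j).totalDegree ≤ k) ∧
      p = ∑ j ∈ S, h j * q j}

/-- The quadratic module `QM(g)` generated by `(g j)_{j ∈ S}`. -/
def QModFull {n : ℕ} {κ : Type} (S : Finset κ) (g : κ → RPoly n) : Set (RPoly n) :=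
  {p | ∃ σ0 : RPoly n, ∃ σ : κ → RPoly n,
      IsSOS σ0 ∧ (∀ j ∈ S, IsSOS (σ j)) ∧ p = σ0 + ∑ j ∈ S, g j * σ j}

/-- The ideal `Ideal(h)` generated by `(h j)_{j ∈ S}`. -/
def IdealFull {n : ℕ} {ι : Type} (S : Finset ι) (h : ι → RPoly n) : Set (RPoly n) :=
  (Ideal.span (h '' (S : Set ι)) : Ideal (RPoly n))

/-- `Ideal(c_eq) + QM(c_in)` is archimedean. -/
def ArchimedeanQM {n : ℕ} (E I : Finset ℕ) (c : ℕ → RPoly n) : Prop :=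
  ∃ R : ℝ, 0 < R ∧ ∃ p1 ∈ IdealFull E c, ∃ p2 ∈ QModFull I c,
    (C R : RPoly n) - ∑ i, (X i : RPoly n) ^ 2 = p1 + p2

/-- The basic closed semialgebraic set `K`. -/
def Kset {n : ℕ} (E I : Finset ℕ) (c : ℕ → RPoly n) : Set (Fin n → ℝ) :=
  {x | (∀ j ∈ E, eval x (c j) = 0) ∧ (∀ j ∈ I, 0 ≤ eval x (c j))}

/-- The bilinear pairing `⟨p, y⟩ = ∑_α p_α y_α`. -/
def pairing {n : ℕ} (p : RPoly n) (y : (Fin n →₀ ℕ) → ℝ) : ℝ :=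
  ∑ α ∈ p.support, p.coeff α * y α

/-- Membership in the moment cone `ℛ_d(K)`: the entries `y_α`, `|α| ≤ d`, are the
moments of a finite Borel measure supported in the closed set `K`. -/
def InMomentCone {n : ℕ} (d : ℕ) (K : Set (Fin n → ℝ)) (y : (Fin n →₀ ℕ) → ℝ) : Prop :=
  ∃ μ : Measure (Fin n → ℝ), IsFiniteMeasure μ ∧ μ Kᶜ = 0 ∧
    ∀ α : Fin n →₀ ℕ, mdeg α ≤ d →
      Integrable (fun x => ∏ i, x i ^ α i) μ ∧
      y α = ∫ x, (∏ i, x i ^ α i) ∂μ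

/-- The cone `P_d(K)` of polynomials of degree at most `d` that are nonnegative on `K`. -/
def PdCone {n : ℕ} (d : ℕ) (K : Set (Fin n → ℝ)) : Set (RPoly n) :=
  {p | p.totalDegree ≤ d ∧ ∀ x ∈ K, 0 ≤ eval x p}

/-- The interior of `P_d(K)` in the coefficient topology of `ℝ[x]_d`. -/
def PdInterior {n : ℕ} (d : ℕ) (K : Set (Fin n → ℝ)) : Set (RPoly n) :=
  {p | p.totalDegree ≤ d ∧ ∃ ε : ℝ, 0 < ε ∧ ∀ q : RPoly n, q.totalDegree ≤ d →
      (∀ α : Fin n →₀ ℕ, |q.coeff α - p.coeff α| ≤ ε) → ∀ x ∈ K, 0 ≤ eval x q}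

instance degLEFintype (n t : ℕ) : Fintype {α : Fin n →₀ ℕ // mdeg α ≤ t} := by
  apply Fintype.ofInjective
    (fun a : {α : Fin n →₀ ℕ // mdeg α ≤ t} =>
      (fun i => (⟨a.1 i, by
        have h1 : a.1 i ≤ mdeg a.1 :=
          Finset.single_le_sum (fun j _ => Nat.zero_le _) (Finset.mem_univ i)
        exact Nat.lt_succ_of_le (le_trans h1 a.2)⟩ : Fin (t + 1))) :
        {α : Fin n →₀ ℕ // mdeg α ≤ t} → (Fin n → Fin (t + 1)))
  intro a b hab
  apply Subtype.ext
  ext i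
  exact congrArg Fin.val (congrFun hab i)

/-- The moment matrix `M_t[w]`, indexed by monomial powers of degree at most `t`. -/
def momentMatrix {n : ℕ} (t : ℕ) (w : (Fin n →₀ ℕ) → ℝ) :
    Matrix {α : Fin n →₀ ℕ // mdeg α ≤ t} {α : Fin n →₀ ℕ // mdeg α ≤ t} ℝ :=
  fun α β => w (α.1 + β.1)

/-- `w` admits a flat truncation: for some `d0 ≤ t ≤ k`,
`rank M_{t-dK}[w] = rank M_t[w]`. -/
def HasFlatTruncation {n : ℕ} (d0 dK k : ℕ) (w : (Fin n →₀ ℕ) → ℝ) : Prop :=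
  ∃ t : ℕ, d0 ≤ t ∧ t ≤ k ∧
    (momentMatrix (t - dK) w).rank = (momentMatrix t w).rank

/-- The gradient of a polynomial at a point. -/
def gradP {n : ℕ} (p : RPoly n) (u : Fin n → ℝ) : Fin n → ℝ :=
  fun i => eval u (pderiv i p)

/-- The Hessian of a polynomial at a point. -/
def hessP {n : ℕ} (p : RPoly n) (u : Fin n → ℝ) : Fin n → Fin n → ℝ :=
  fun i j => eval u (pderiv i (pderiv j p))

/-- The classical optimality conditions (LICQC, KKT with SCC and SOSC) at the point `u`
for the problem: minimize `F` subject to `ge j = 0` (`j ∈ Es`), `gi j ≥ 0` (`j ∈ Is`). -/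
def OptCondsAt {n : ℕ} {ι κ : Type}
    (Es : Finset ι) (ge : ι → RPoly n) (Is : Finset κ) (gi : κ → RPoly n)
    (F : RPoly n) (u : Fin n → ℝ) : Prop :=
  -- LICQC: gradients of active constraints are linearly independent
  LinearIndependent ℝ
    (Sum.elim
      (fun j : {j : ι // j ∈ Es ∧ eval u (ge j) = 0} => gradP (ge j.1) u)
      (fun j : {j : κ // j ∈ Is ∧ eval u (gi j) = 0} => gradP (gi j.1) u)) ∧
  ∃ (lamE : ι → ℝ) (lamI : κ → ℝ),
    -- KKT stationarity
    (gradP F u =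
      (∑ j ∈ Es, lamE j • gradP (ge j) u) + ∑ j ∈ Is, lamI j • gradP (gi j) u) ∧
    (∀ j ∈ Is, 0 ≤ lamI j ∧ lamI j * eval u (gi j) = 0) ∧
    -- SCC
    (∀ j ∈ Is, 0 < lamI j + eval u (gi j)) ∧
    -- SOSC
    (∀ v : Fin n → ℝ, v ≠ 0 →
      (∀ j ∈ Es, (∑ i, v i * gradP (ge j) u i) = 0) →
      (∀ j ∈ Is, eval u (gi j) = 0 → (∑ i, v i * gradP (gi j) u i) = 0) →
      0 < ∑ i, ∑ i', v i *
        ((hessP F u i i' - ∑ j ∈ Es, lamE j * hessP (ge j) u i i')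
          - ∑ j ∈ Is, lamI j * hessP (gi j) u i i') * v i')

/-- The degree-`ℓ` homogenization `x_0^ℓ p(x/x_0)` of `p`; the new variable `x_0`
is the variable of index `0` in `Fin (n+1)`. -/
def homogAux {n : ℕ} (ℓ : ℕ) (p : RPoly n) : RPoly (n + 1) :=
  ∑ α ∈ p.support,
    monomial
      (Finsupp.single (0 : Fin (n + 1)) (ℓ - mdeg α) + Finsupp.mapDomain Fin.succ α)
      (p.coeff α)

/-- The homogenization `p̃` of `p`. -/
def homogenize {n : ℕ} (p : RPoly n) : RPoly (n + 1) := homogAux p.totalDegree p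

/-- The polynomial `‖x̃‖² - 1`. -/
def sphereP (n : ℕ) : RPoly (n + 1) := (∑ i, (X i : RPoly (n + 1)) ^ 2) - 1

/-- The homogenization `K̃` of the set `K`. -/
def Khom {n : ℕ} (E I : Finset ℕ) (c : ℕ → RPoly n) : Set (Fin (n + 1) → ℝ) :=
  {x | (∀ j ∈ E, eval x (homogenize (c j)) = 0) ∧
       (∀ j ∈ I, 0 ≤ eval x (homogenize (c j))) ∧
       (∑ i, (x i) ^ 2) = 1 ∧ 0 ≤ x 0}

/-- `K` is closed at infinity. -/
def ClosedAtInfinity {n : ℕ} (E I : Finset ℕ) (c : ℕ → RPoly n) : Prop :=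
  Khom E I c = closure (Khom E I c ∩ {x | 0 < x 0})

/-- The tuple `c̃_eq`: the homogenizations `c̃_j` together with `‖x̃‖² - 1`
(the latter indexed by `none`). -/
def gEqH {n : ℕ} (c : ℕ → RPoly n) : Option ℕ → RPoly (n + 1) :=
  fun o => o.elim (sphereP n) (fun j => homogenize (c j))

/-- The tuple `c̃_in`: the homogenizations `c̃_j` together with `x_0`
(the latter indexed by `none`). -/
def gInH {n : ℕ} (c : ℕ → RPoly n) : Option ℕ → RPoly (n + 1) :=
  fun o => o.elim (X 0) (fun j => homogenize (c j))

/-- The index set of a tuple extended by one extra entry (indexed by `none`). -/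
def OS (S : Finset ℕ) : Finset (Option ℕ) := insert none (S.image some)

/-- Feasibility of `θ` for the linear conic problem (P). -/
def PFeas {n m : ℕ} (m1 d : ℕ) (f : RPoly n) (a : Fin m → RPoly n)
    (K : Set (Fin n → ℝ)) (θ : Fin m → ℝ) : Prop :=
  (∀ i : Fin m, m1 ≤ (i : ℕ) → 0 ≤ θ i) ∧ (f - ∑ i, C (θ i) * a i) ∈ PdCone d K

/-- The optimal value `ϑ*` of the linear conic problem (P). -/
def PVal {n m : ℕ} (m1 d : ℕ) (f : RPoly n) (a : Fin m → RPoly n) (b : Fin m → ℝ)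
    (K : Set (Fin n → ℝ)) : ℝ :=
  sSup {v : ℝ | ∃ θ : Fin m → ℝ, PFeas m1 d f a K θ ∧ v = ∑ i, b i * θ i}

/-- Feasibility of `y` for the generalized moment problem (M). -/
def MFeas {n m : ℕ} (m1 d : ℕ) (a : Fin m → RPoly n) (b : Fin m → ℝ)
    (K : Set (Fin n → ℝ)) (y : (Fin n →₀ ℕ) → ℝ) : Prop :=
  InMomentCone d K y ∧
  (∀ i : Fin m, (i : ℕ) < m1 → pairing (a i) y = b i) ∧
  (∀ i : Fin m, m1 ≤ (i : ℕ) → b i ≤ pairing (a i) y)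

/-- The optimal value `φ*` of the generalized moment problem (M). -/
def MVal {n m : ℕ} (m1 d : ℕ) (f : RPoly n) (a : Fin m → RPoly n) (b : Fin m → ℝ)
    (K : Set (Fin n → ℝ)) : ℝ :=
  sInf {v : ℝ | ∃ y : (Fin n →₀ ℕ) → ℝ, MFeas m1 d a b K y ∧ v = pairing f y}

/-- The optimal value `ϑ_k` of the `k`th SOS relaxation of (P). -/
def SOSRelaxVal {n m : ℕ} {ι κ : Type} (m1 : ℕ) (f : RPoly n) (a : Fin m → RPoly n)
    (b : Fin m → ℝ) (Es : Finset ι) (ge : ι → RPoly n) (Is : Finset κ) (gi : κ → RPoly n)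
    (k : ℕ) : ℝ :=
  sSup {v : ℝ | ∃ θ : Fin m → ℝ, (∀ i : Fin m, m1 ≤ (i : ℕ) → 0 ≤ θ i) ∧
      (∃ p1 ∈ IdealDeg Es ge (2 * k), ∃ p2 ∈ QModDeg Is gi (2 * k),
        f - ∑ i, C (θ i) * a i = p1 + p2) ∧
      v = ∑ i, b i * θ i}

/-- The semidefinite constraints of the `k`th moment relaxation:
the localizing vectors of the equality constraints vanish, and the localizing
matrices of the inequality constraints and the moment matrix are positive
semidefinite (stated equivalently via the associated quadratic forms). -/
def MomRelaxPSD {n : ℕ} {ι κ : Type} (Es : Finset ι) (ge : ι → RPoly n)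
    (Is : Finset κ) (gi : κ → RPoly n) (k : ℕ) (w : (Fin n →₀ ℕ) → ℝ) : Prop :=
  (∀ j ∈ Es, ∀ p : RPoly n, p.totalDegree + (ge j).totalDegree ≤ 2 * k →
      pairing (ge j * p) w = 0) ∧
  (∀ j ∈ Is, ∀ p : RPoly n, p.totalDegree + ((gi j).totalDegree + 1) / 2 ≤ k →
      0 ≤ pairing (gi j * p ^ 2) w) ∧
  (∀ p : RPoly n, p.totalDegree ≤ k → 0 ≤ pairing (p ^ 2) w)

/-- Feasibility of `w` for the `k`th moment relaxation of (M). -/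
def GMomFeas {n m : ℕ} {ι κ : Type} (m1 : ℕ) (a : Fin m → RPoly n) (b : Fin m → ℝ)
    (Es : Finset ι) (ge : ι → RPoly n) (Is : Finset κ) (gi : κ → RPoly n) (k : ℕ)
    (w : (Fin n →₀ ℕ) → ℝ) : Prop :=
  (∀ i : Fin m, (i : ℕ) < m1 → pairing (a i) w = b i) ∧
  (∀ i : Fin m, m1 ≤ (i : ℕ) → b i ≤ pairing (a i) w) ∧
  MomRelaxPSD Es ge Is gi k w

/-- The optimal value `φ_k` of the `k`th moment relaxation of (M). -/
def GMomVal {n m : ℕ} {ι κ : Type} (m1 : ℕ) (f : RPoly n) (a : Fin m → RPoly n)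
    (b : Fin m → ℝ) (Es : Finset ι) (ge : ι → RPoly n) (Is : Finset κ) (gi : κ → RPoly n)
    (k : ℕ) : ℝ :=
  sInf {v : ℝ | ∃ w : (Fin n →₀ ℕ) → ℝ,
      GMomFeas m1 a b Es ge Is gi k w ∧ v = pairing f w}

/-- The optimal value `f_k^den` of the `k`th order relaxation with denominators. -/
def DenRelaxVal {n : ℕ} (E I : Finset ℕ) (c : ℕ → RPoly n) (f : RPoly n) (d k : ℕ) : ℝ :=
  sSup {γ : ℝ | ∃ p1 ∈ IdealDeg E c (2 * k + d), ∃ p2 ∈ QModDeg I c (2 * k + d),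
      (1 + ∑ i, (X i : RPoly n) ^ 2) ^ k * (f - C γ) = p1 + p2}


/-- The degree bound `d_K = max_j ⌈deg(c_j)/2⌉`. -/
def dKOrig {n : ℕ} (E I : Finset ℕ) (c : ℕ → RPoly n) : ℕ :=
  (E ∪ I).sup fun j => ((c j).totalDegree + 1) / 2

/-- The degree bound `d_0` for the GMP relaxations. -/
def d0GMP {n m : ℕ} (f : RPoly n) (a : Fin m → RPoly n) (E I : Finset ℕ)
    (c : ℕ → RPoly n) : ℕ :=
  max ((f.totalDegree + 1) / 2)
    (max (dKOrig E I c) (Finset.univ.sup fun i : Fin m => ((a i).totalDegree + 1) / 2))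

/-- The degree bound `d̃_K` for the homogenized constraining tuples. -/
def dKHom {n : ℕ} (E I : Finset ℕ) (c : ℕ → RPoly n) : ℕ :=
  max ((OS E).sup fun o => ((gEqH c o).totalDegree + 1) / 2)
      ((OS I).sup fun o => ((gInH c o).totalDegree + 1) / 2)

end

/-!
The polynomial `p = f - ∑ θ*ᵢ aᵢ` is nonnegative on `K`, and it suffices to show that it lies in
`Ideal(c_eq) + QM(c_in)`: a certificate has finite degree, so `θ*` is feasible for all large SOS
relaxations and gives a lower bound for the moment relaxations, while a Farkas argument under the
Slater condition yields a measure on `K` whose moments attain the same value.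

By strict complementarity and the second order condition the zeros of `p` on `K` are isolated,
hence finite in number. Let `u` be the sum of the squares of generators of their vanishing ideal
plus the sum of the active inequality constraints, localized at the zeros. The elements bounded by
multiples of `u` form an ideal containing `p`. If `p` were not in the quadratic module, a pure
state on this ideal would be nonpositive at `p`, and pure states are multiplicative over
evaluation at some point `x`. If `x` is not a zero of `p`, then `x ∈ K` and `p(x) ≤ 0`, which is
absurd. If it is one, expanding the Lagrangian to second order at `x` shows that the covariance
matrix of the state and its values at the active constraints vanish; then the state vanishes at
`u`, contradicting its normalization.
-/

/-! ### States on cones with an order unit -/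

section States

variable {V : Type*} [AddCommGroup V] [Module ℝ V] {P : PointedCone ℝ V} {u : V}

/-- `u` is an order unit of the cone `P`: adding a multiple of `u` moves every vector into `P`. -/
def IsOrderUnit (P : PointedCone ℝ V) (u : V) : Prop :=
  ∀ b, ∃ N : ℝ, 0 ≤ N ∧ N • u + b ∈ P

/-- A state of `(P, u)`: a linear functional that is nonnegative on the cone `P` and takes the
value `1` at `u`. -/
structure IsState (P : PointedCone ℝ V) (u : V) (L : V →ₗ[ℝ] ℝ) : Prop where
  nonneg : ∀ b ∈ P, 0 ≤ L b
  map_unit : L u = 1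

/-- The states of `(P, u)`, as a set of functions so as to carry the topology of pointwise
convergence. -/
def stateSpace (P : PointedCone ℝ V) (u : V) : Set (V → ℝ) :=
  {φ | ∃ L : V →ₗ[ℝ] ℝ, IsState P u L ∧ ⇑L = φ}

theorem IsOrderUnit.mem (hu : IsOrderUnit P u) : u ∈ P := by
  obtain ⟨N, hN, h⟩ := hu u
  have : (N + 1)⁻¹ • (N • u + u) = u := by
    rw [show N • u + u = (N + 1) • u by module, inv_smul_smul₀ (by positivity)]
  exact this ▸ P.smul_mem (by positivity) h

theorem IsOrderUnit.exists_add_sub_mem (hu : IsOrderUnit P u) (b : V) :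
    ∃ N : ℝ, 0 ≤ N ∧ N • u + b ∈ P ∧ N • u - b ∈ P := by
  obtain ⟨N₁, hN₁, h₁⟩ := hu b
  obtain ⟨N₂, hN₂, h₂⟩ := hu (-b)
  refine ⟨N₁ + N₂, by positivity, ?_, ?_⟩
  · convert P.add_mem h₁ (P.smul_mem hN₂ hu.mem) using 1
    module
  · convert P.add_mem h₂ (P.smul_mem hN₁ hu.mem) using 1
    module

theorem IsOrderUnit.neg_notMem (hu : IsOrderUnit P u) {p : V} (hp : p ∉ P) : -u ∉ P := by
  intro hneg
  obtain ⟨N, hN, h⟩ := hu p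
  apply hp
  convert P.add_mem h (P.smul_mem hN hneg) using 1
  module

theorem IsOrderUnit.nonneg_of_smul_add_smul_mem (hu : IsOrderUnit P u) {p : V} (hp : p ∉ P)
    {r t : ℝ} (ht : 0 ≤ t) (h : r • u + t • p ∈ P) : 0 ≤ r := by
  by_contra! hr
  rcases ht.eq_or_lt with rfl | ht
  · apply hu.neg_notMem hp
    rw [zero_smul, add_zero] at h
    have := P.smul_mem (r := (-r)⁻¹) (inv_nonneg.2 (by linarith)) h
    rwa [smul_smul, inv_neg, neg_mul, inv_mul_cancel₀ hr.ne,
      neg_one_smul] at this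
  · apply hp
    have htp : t • p ∈ P := by
      convert P.add_mem h (P.smul_mem (r := -r) (by linarith) hu.mem) using 1
      module
    simpa [ht.ne'] using P.smul_mem (inv_nonneg.2 ht.le) htp

/-- The cone of all `x` with `x + t • p ∈ P` for some `t ≥ 0`. A functional that is nonnegative on
it is nonnegative on `P` and nonpositive at `p`. -/
def coneSubRay (P : PointedCone ℝ V) (p : V) : PointedCone ℝ V where
  carrier := {x | ∃ t : ℝ, 0 ≤ t ∧ x + t • p ∈ P}
  zero_mem' := ⟨0, le_rfl, by simp⟩
  add_mem' := by
    rintro x y ⟨s, hs, hx⟩ ⟨t, ht, hy⟩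
    refine ⟨s + t, by positivity, ?_⟩
    convert P.add_mem hx hy using 1
    module
  smul_mem' := by
    rintro ⟨r, hr⟩ x ⟨t, ht, hx⟩
    refine ⟨r * t, by positivity, ?_⟩
    convert P.smul_mem hr hx using 1
    rw [smul_add, smul_smul]
    rfl

theorem exists_isState_apply_nonpos (hu : IsOrderUnit P u) {p : V} (hp : p ∉ P) :
    ∃ L : V →ₗ[ℝ] ℝ, IsState P u L ∧ L p ≤ 0 := by
  have hu0 : u ≠ 0 := fun h => hu.neg_notMem hp (by rw [h, neg_zero]; exact P.zero_mem)
  let F : V →ₗ.[ℝ] ℝ := LinearPMap.mkSpanSingleton u (1 : ℝ) hu0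
  have hF_nonneg : ∀ x : F.domain, (x : V) ∈ coneSubRay P p → 0 ≤ F x := by
    rintro ⟨x, hx⟩ ⟨t, ht, hxt⟩
    obtain ⟨r, rfl⟩ := Submodule.mem_span_singleton.1 hx
    have hFr : F ⟨r • u, hx⟩ = r • (1 : ℝ) := LinearPMap.mkSpanSingleton'_apply _ _ _ _ _
    rw [hFr, smul_eq_mul, mul_one]
    exact hu.nonneg_of_smul_add_smul_mem hp ht hxt
  have hF_dense : ∀ y, ∃ x : F.domain, (x : V) + y ∈ coneSubRay P p := fun y => by
    obtain ⟨N, -, h⟩ := hu y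
    exact ⟨⟨N • u, Submodule.smul_mem _ _ (Submodule.mem_span_singleton_self u)⟩,
      0, le_rfl, by simpa using h⟩
  obtain ⟨L, hLF, hL⟩ := riesz_extension (coneSubRay P p) F hF_nonneg hF_dense
  refine ⟨L, ⟨fun b hb => hL b ⟨0, le_rfl, by simpa using hb⟩, ?_⟩, ?_⟩
  · rw [hLF ⟨u, Submodule.mem_span_singleton_self u⟩]
    exact LinearPMap.mkSpanSingleton'_apply_self _ _ _ _
  · simpa using hL (-p) ⟨1, zero_le_one, by simp⟩

theorem IsState.abs_apply_le {L : V →ₗ[ℝ] ℝ} (hL : IsState P u L) {b : V} {N : ℝ}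
    (hadd : N • u + b ∈ P) (hsub : N • u - b ∈ P) : |L b| ≤ N := by
  have h₁ := hL.nonneg _ hadd
  have h₂ := hL.nonneg _ hsub
  simp only [map_add, map_sub, map_smul, hL.map_unit, smul_eq_mul, mul_one] at h₁ h₂
  exact abs_le.2 ⟨by linarith, by linarith⟩

theorem isClosed_stateSpace : IsClosed (stateSpace P u) := by
  have heq : stateSpace P u = Set.range ((⇑) : (V →ₗ[ℝ] ℝ) → V → ℝ) ∩
      ((⋂ b ∈ P, {φ | 0 ≤ φ b}) ∩ {φ | φ u = 1}) := by
    ext φ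
    simp only [stateSpace, Set.mem_ofPred_eq, Set.mem_inter_iff, Set.mem_range, Set.mem_iInter]
    constructor
    · rintro ⟨L, hL, rfl⟩
      exact ⟨⟨L, rfl⟩, hL.nonneg, hL.map_unit⟩
    · rintro ⟨⟨L, rfl⟩, hnonneg, hunit⟩
      exact ⟨L, ⟨hnonneg, hunit⟩, rfl⟩
  rw [heq]
  refine (LinearMap.isClosed_range_coe V ℝ (RingHom.id ℝ)).inter (IsClosed.inter ?_ ?_)
  · exact isClosed_biInter fun b _ => isClosed_le continuous_const (continuous_apply b)
  · exact isClosed_eq (continuous_apply u) continuous_const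

theorem isCompact_stateSpace (hu : IsOrderUnit P u) : IsCompact (stateSpace P u) := by
  choose N _ hadd hsub using hu.exists_add_sub_mem
  refine (isCompact_univ_pi fun b => isCompact_Icc (a := -N b) (b := N b)).of_isClosed_subset
    isClosed_stateSpace ?_
  rintro _ ⟨L, hL, rfl⟩ b -
  exact abs_le.1 (hL.abs_apply_le (hadd b) (hsub b))

/-- A pure state: an extreme point of the state space. -/
def IsPureState (P : PointedCone ℝ V) (u : V) (L : V →ₗ[ℝ] ℝ) : Prop :=
  ⇑L ∈ (stateSpace P u).extremePoints ℝ

theorem IsPureState.isState {L : V →ₗ[ℝ] ℝ} (hL : IsPureState P u L) : IsState P u L := by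
  obtain ⟨L', hL', heq⟩ := hL.1
  rwa [← DFunLike.coe_injective heq]

theorem exists_isPureState_apply_nonpos (hu : IsOrderUnit P u) {p : V} (hp : p ∉ P) :
    ∃ L : V →ₗ[ℝ] ℝ, IsPureState P u L ∧ L p ≤ 0 := by
  obtain ⟨L₀, hL₀, hL₀p⟩ := exists_isState_apply_nonpos hu hp
  let ev : (V → ℝ) →L[ℝ] ℝ := -ContinuousLinearMap.proj (R := ℝ) (φ := fun _ : V => ℝ) p
  let face : Set (V → ℝ) := {φ ∈ stateSpace P u | ∀ ψ ∈ stateSpace P u, ev ψ ≤ ev φ}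
  have hface : IsExposed ℝ (stateSpace P u) face := fun _ => ⟨ev, rfl⟩
  have hcompact := isCompact_stateSpace hu
  obtain ⟨φ₀, hφ₀, hmax⟩ :=
    hcompact.exists_isMaxOn ⟨L₀, L₀, hL₀, rfl⟩ ev.continuous.continuousOn
  obtain ⟨φ, hφ⟩ := (hface.isCompact hcompact).extremePoints_nonempty ⟨φ₀, hφ₀, hmax⟩
  obtain ⟨L, -, rfl⟩ := hφ.1.1
  refine ⟨L, hface.isExtreme.extremePoints_subset_extremePoints hφ, ?_⟩
  have hle : -L₀ p ≤ -L p := hφ.1.2 L₀ ⟨L₀, hL₀, rfl⟩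
  linarith

theorem IsOrderUnit.eq_zero_of_apply_eq_zero (hu : IsOrderUnit P u) {G : V →ₗ[ℝ] ℝ}
    (hG : ∀ b ∈ P, 0 ≤ G b) (hGu : G u = 0) : G = 0 := by
  ext b
  obtain ⟨N, -, hadd, hsub⟩ := hu.exists_add_sub_mem b
  have h₁ := hG _ hadd
  have h₂ := hG _ hsub
  simp only [map_add, map_sub, map_smul, hGu, smul_zero, zero_add, zero_sub] at h₁ h₂
  exact le_antisymm (neg_nonneg.1 h₂) h₁

/-- A functional between `0` and a multiple of a pure state is a multiple of it: otherwise its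
normalization and that of the difference would exhibit the state as a proper convex combination. -/
theorem IsPureState.eq_smul_of_le {L G : V →ₗ[ℝ] ℝ} (hu : IsOrderUnit P u)
    (hL : IsPureState P u L) {r : ℝ} (hG0 : ∀ b ∈ P, 0 ≤ G b) (hGr : ∀ b ∈ P, G b ≤ r * L b) :
    G = G u • L := by
  have hLu := hL.isState.map_unit
  obtain ht | ht := (hG0 u hu.mem).eq_or_lt
  · rw [← ht, zero_smul]
    exact hu.eq_zero_of_apply_eq_zero hG0 ht.symm
  set t := G u
  set s := r + 1
  have hts : 0 < s - t := by
    have := hGr u hu.mem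
    rw [hLu] at this
    linarith
  have hs : 0 < s := by linarith
  have hnormG : IsState P u (t⁻¹ • G) :=
    ⟨fun b hb => mul_nonneg (inv_nonneg.2 ht.le) (hG0 b hb), inv_mul_cancel₀ ht.ne'⟩
  have hnormDiff : IsState P u ((s - t)⁻¹ • (s • L - G)) := by
    refine ⟨fun b hb => mul_nonneg (inv_nonneg.2 hts.le) ?_, ?_⟩
    · have := hGr b hb
      have := hL.isState.nonneg b hb
      simp only [LinearMap.sub_apply, LinearMap.smul_apply, smul_eq_mul, s]
      linarith
    · simp only [LinearMap.sub_apply, LinearMap.smul_apply, smul_eq_mul, hLu, mul_one]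
      exact inv_mul_cancel₀ hts.ne'
  have hseg : ⇑L ∈ openSegment ℝ ⇑(t⁻¹ • G) ⇑((s - t)⁻¹ • (s • L - G)) := by
    refine ⟨t / s, (s - t) / s, by positivity, by positivity, by field_simp; ring, ?_⟩
    funext b
    simp only [Pi.add_apply, Pi.smul_apply, LinearMap.smul_apply, LinearMap.sub_apply, smul_eq_mul]
    field_simp
    ring
  have heq : t⁻¹ • G = L := DFunLike.coe_injective
    (hL.2 ⟨_, hnormG, rfl⟩ ⟨_, hnormDiff, rfl⟩ hseg)
  rw [← heq, smul_inv_smul₀ ht.ne']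

end States

/-! ### Pure states are multiplicative -/

section Multiplicative

theorem apply_one_le_mul_apply_zero_of_logConvex {m : ℕ → ℝ} (hm : ∀ k, 0 ≤ m k)
    (hlog : ∀ k, m (k + 1) ^ 2 ≤ m k * m (k + 2)) {C r : ℝ} (hr : 0 < r)
    (hgrowth : ∀ k, m k ≤ C * r ^ k) : m 1 ≤ r * m 0 := by
  by_contra! hcon
  have hm0 : 0 < m 0 := by
    refine (hm 0).lt_of_ne fun h0 => ?_
    have h1 : m 1 ^ 2 ≤ 0 := by simpa [← h0] using hlog 0
    have : m 1 = 0 := pow_eq_zero_iff two_ne_zero |>.1 (le_antisymm h1 (sq_nonneg _))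
    simp [← h0, this] at hcon
  set ρ := m 1 / m 0
  have hrρ : r < ρ := (lt_div_iff₀ hm0).2 hcon
  have hρ : 0 < ρ := hr.trans hrρ
  have hratio : ∀ k, 0 < m k ∧ ρ * m k ≤ m (k + 1) := by
    intro k
    induction k with
    | zero => exact ⟨hm0, (div_mul_cancel₀ _ hm0.ne').le⟩
    | succ k ih =>
      obtain ⟨hk, hle⟩ := ih
      refine ⟨(mul_pos hρ hk).trans_le hle, le_of_mul_le_mul_right ?_ hk⟩
      calc ρ * m (k + 1) * m k = ρ * m k * m (k + 1) := by ring
        _ ≤ m (k + 1) * m (k + 1) := by gcongr; exact hm _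
        _ ≤ m (k + 2) * m k := by linarith [hlog k]
  have hgeom : ∀ k, ρ ^ k * m 0 ≤ m k := by
    intro k
    induction k with
    | zero => simp
    | succ k ih =>
      calc ρ ^ (k + 1) * m 0 = ρ * (ρ ^ k * m 0) := by ring
        _ ≤ ρ * m k := by gcongr
        _ ≤ _ := (hratio k).2
  obtain ⟨k, hk⟩ := (tendsto_pow_atTop_atTop_of_one_lt ((one_lt_div hr).2 hrρ)
    |>.eventually_gt_atTop (C / m 0)).exists
  refine hk.not_ge ?_
  rw [div_pow, div_le_div_iff₀ (by positivity) hm0]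
  exact (hgeom k).trans (hgrowth k)

variable {A V : Type*} [CommRing A] [Algebra ℝ A] [AddCommGroup V] [Module ℝ V] [Module A V]
  [IsScalarTower ℝ A V] {P : PointedCone ℝ V} {u : V} {L : V →ₗ[ℝ] ℝ}

theorem IsState.sq_apply_pow_smul_le (hP : ∀ (a : A), ∀ b ∈ P, a ^ 2 • b ∈ P)
    (hL : IsState P u L) (c : A) {b : V} (hb : b ∈ P) (k : ℕ) :
    L ((c ^ 2) ^ (k + 1) • b) ^ 2 ≤ L ((c ^ 2) ^ k • b) * L ((c ^ 2) ^ (k + 2) • b) := by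
  have hquad : ∀ t : ℝ, 0 ≤ L ((c ^ 2) ^ (k + 2) • b) * (t * t)
      + (2 * L ((c ^ 2) ^ (k + 1) • b)) * t + L ((c ^ 2) ^ k • b) := by
    intro t
    have h := hL.nonneg _ (hP (c ^ k * (1 + t • c ^ 2)) b hb)
    have hexpand : (c ^ k * (1 + t • c ^ 2)) ^ 2 • b = (t * t) • (c ^ 2) ^ (k + 2) • b
        + ((2 * t) • (c ^ 2) ^ (k + 1) • b + (c ^ 2) ^ k • b) := by
      simp only [← smul_assoc, ← add_smul]
      congr 1
      algebra
    simp only [hexpand, map_add, map_smul, smul_eq_mul] at h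
    linarith
  have := discrim_le_zero hquad
  rw [discrim] at this
  linarith

theorem IsState.apply_pow_smul_unit_le (hP : ∀ (a : A), ∀ b ∈ P, a ^ 2 • b ∈ P)
    (hL : IsState P u L) {c : A} {r : ℝ} (hr : 0 ≤ r) (hc : r • u - c ^ 2 • u ∈ P) (k : ℕ) :
    L ((c ^ 2) ^ k • u) ≤ r ^ k := by
  induction k with
  | zero => simp [hL.map_unit]
  | succ k ih =>
    have h := hL.nonneg _ (hP (c ^ k) _ hc)
    have hexpand : (c ^ k) ^ 2 • (r • u - c ^ 2 • u)
        = r • (c ^ 2) ^ k • u - (c ^ 2) ^ (k + 1) • u := by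
      simp only [smul_sub, smul_comm _ r, smul_smul]
      ring_nf
    rw [hexpand, map_sub, map_smul, smul_eq_mul] at h
    calc L ((c ^ 2) ^ (k + 1) • u) ≤ r * L ((c ^ 2) ^ k • u) := by linarith
      _ ≤ r * r ^ k := by gcongr
      _ = r ^ (k + 1) := by ring

theorem IsState.apply_sq_smul_le (hP : ∀ (a : A), ∀ b ∈ P, a ^ 2 • b ∈ P)
    (hu : IsOrderUnit P u) (hL : IsState P u L) {c : A} {r : ℝ} (hr : 0 < r)
    (hc : r • u - c ^ 2 • u ∈ P) {b : V} (hb : b ∈ P) : L (c ^ 2 • b) ≤ r * L b := by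
  obtain ⟨N, hN, hbN⟩ := hu (-b)
  have hpow : ∀ k, (c ^ 2) ^ k = (c ^ k) ^ 2 := fun k => by ring
  have hbound : L ((c ^ 2) ^ 1 • b) ≤ r * L ((c ^ 2) ^ 0 • b) := by
    refine apply_one_le_mul_apply_zero_of_logConvex (m := fun k => L ((c ^ 2) ^ k • b)) (C := N)
      (fun k => hL.nonneg _ (hpow k ▸ hP _ b hb)) (hL.sq_apply_pow_smul_le hP c hb) hr fun k => ?_
    have h := hL.nonneg _ (hP (c ^ k) _ hbN)
    rw [← hpow, smul_add, smul_comm _ N, smul_neg, map_add, map_neg, map_smul, smul_eq_mul] at h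
    have := mul_le_mul_of_nonneg_left (hL.apply_pow_smul_unit_le hP hr.le hc k) hN
    linarith
  simpa using hbound

theorem IsPureState.apply_sq_smul (hP : ∀ (a : A), ∀ b ∈ P, a ^ 2 • b ∈ P)
    (hu : IsOrderUnit P u) (hL : IsPureState P u L) (c : A) (b : V) :
    L (c ^ 2 • b) = L (c ^ 2 • u) * L b := by
  obtain ⟨N, hN, hcN⟩ := hu (-(c ^ 2 • u))
  have hc : (N + 1) • u - c ^ 2 • u ∈ P := by
    convert P.add_mem hcN hu.mem using 1
    module
  have h := hL.eq_smul_of_le (G := L ∘ₗ Algebra.lsmul ℝ ℝ V (c ^ 2)) (r := N + 1) hu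
    (fun b hb => hL.isState.nonneg _ (hP c b hb))
    (fun b hb => hL.isState.apply_sq_smul_le hP hu (by positivity) hc hb)
  exact LinearMap.congr_fun h b

theorem IsPureState.apply_smul (hP : ∀ (a : A), ∀ b ∈ P, a ^ 2 • b ∈ P)
    (hu : IsOrderUnit P u) (hL : IsPureState P u L) (a : A) (b : V) :
    L (a • b) = L (a • u) * L b := by
  have hpolar : ∀ b, L (a • b)
      = (1 / 4 : ℝ) * L ((a + 1) ^ 2 • b) - (1 / 4 : ℝ) * L ((a - 1) ^ 2 • b) := fun b => by
    simp only [← smul_eq_mul, ← map_smul, ← map_sub, ← smul_assoc, ← sub_smul]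
    congr 2
    algebra
  rw [hpolar b, hpolar u, hL.apply_sq_smul hP hu _ b, hL.apply_sq_smul hP hu _ b]
  ring

theorem IsPureState.exists_algHom (hP : ∀ (a : A), ∀ b ∈ P, a ^ 2 • b ∈ P)
    (hu : IsOrderUnit P u) (hL : IsPureState P u L) :
    ∃ χ : A →ₐ[ℝ] ℝ, ∀ a b, L (a • b) = χ a * L b := by
  have hmul := hL.apply_smul hP hu
  refine ⟨AlgHom.ofLinearMap (L ∘ₗ (LinearMap.toSpanSingleton A V u).restrictScalars ℝ) ?_ ?_,
    hmul⟩
  · simp [hL.isState.map_unit]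
  · intro a b
    simp only [LinearMap.comp_apply, LinearMap.restrictScalars_apply,
      LinearMap.toSpanSingleton_apply, mul_smul]
    exact hmul a (b • u)

end Multiplicative

/-! ### Quadratic modules and bounded elements -/

section BoundedBy

variable {V : Type*} [AddCommGroup V] [Module ℝ V] {P : PointedCone ℝ V} {u b : V}

/-- The vectors lying between two multiples `-N • u` and `N • u`, in the order defined by the
cone `P`. -/
def boundedBy (P : PointedCone ℝ V) (u : V) : Submodule ℝ V where
  carrier := {b | ∃ N : ℝ, 0 ≤ N ∧ N • u + b ∈ P ∧ N • u - b ∈ P}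
  zero_mem' := ⟨0, le_rfl, by simp, by simp⟩
  add_mem' := by
    rintro a b ⟨N, hN, ha₁, ha₂⟩ ⟨N', hN', hb₁, hb₂⟩
    refine ⟨N + N', by positivity, ?_, ?_⟩
    · convert P.add_mem ha₁ hb₁ using 1
      module
    · convert P.add_mem ha₂ hb₂ using 1
      module
  smul_mem' := by
    rintro r a ⟨N, hN, h₁, h₂⟩
    refine ⟨|r| * N, by positivity, ?_⟩
    rcases le_total 0 r with hr | hr
    · rw [abs_of_nonneg hr]
      exact ⟨by convert P.smul_mem hr h₁ using 1; module,
        by convert P.smul_mem hr h₂ using 1; module⟩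
    · rw [abs_of_nonpos hr]
      exact ⟨by convert P.smul_mem (neg_nonneg.2 hr) h₂ using 1; module,
        by convert P.smul_mem (neg_nonneg.2 hr) h₁ using 1; module⟩

theorem mem_boundedBy_of_mem {N : ℝ} (hN : 0 ≤ N) (hu : u ∈ P) (hb : b ∈ P)
    (hsub : N • u - b ∈ P) : b ∈ boundedBy P u :=
  ⟨N, hN, P.add_mem (P.smul_mem hN hu) hb, hsub⟩

theorem self_mem_boundedBy (hu : u ∈ P) : u ∈ boundedBy P u :=
  mem_boundedBy_of_mem zero_le_one hu hu (by simp)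

end BoundedBy

section QuadraticModule

variable {A : Type*} [CommRing A] [Algebra ℝ A] {M : PointedCone ℝ A}

/-- A quadratic module of a real algebra: a convex cone containing `1` and closed under
multiplication by squares. -/
structure IsQuadraticModule (M : PointedCone ℝ A) : Prop where
  one_mem : (1 : A) ∈ M
  sq_mul_mem : ∀ (a : A), ∀ b ∈ M, a ^ 2 * b ∈ M

theorem IsQuadraticModule.sq_mem (hM : IsQuadraticModule M) (a : A) : a ^ 2 ∈ M := by
  simpa using hM.sq_mul_mem a 1 hM.one_mem

theorem mul_mem_of_forall_sq_mem {S W : Submodule ℝ A} (h : ∀ s ∈ W, s ^ 2 ∈ S) {s t : A}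
    (hs : s ∈ W) (ht : t ∈ W) : s * t ∈ S := by
  have hpolar : s * t = (1 / 4 : ℝ) • (s + t) ^ 2 - (1 / 4 : ℝ) • (s - t) ^ 2 := by algebra
  rw [hpolar]
  exact S.sub_mem (S.smul_mem _ (h _ (W.add_mem hs ht))) (S.smul_mem _ (h _ (W.sub_mem hs ht)))

theorem mul_mem_of_forall_sq_mul_mem {S : Submodule ℝ A} (h : ∀ a, ∀ b ∈ S, a ^ 2 * b ∈ S)
    (a : A) {b : A} (hb : b ∈ S) : a * b ∈ S := by
  have hpolar : a * b = (1 / 4 : ℝ) • ((a + 1) ^ 2 * b) - (1 / 4 : ℝ) • ((a - 1) ^ 2 * b) := by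
    algebra
  rw [hpolar]
  exact S.sub_mem (S.smul_mem _ (h _ b hb)) (S.smul_mem _ (h _ b hb))

theorem IsQuadraticModule.sq_mem_boundedBy_one (hM : IsQuadraticModule M) {b : A}
    (hb : b ∈ boundedBy M 1) : b ^ 2 ∈ boundedBy M 1 := by
  obtain ⟨N, hN, hadd, hsub⟩ := hb
  set K := N + 1
  have hadd' : K • 1 + b ∈ M := by
    convert M.add_mem hadd hM.one_mem using 1
    module
  have hsub' : K • 1 - b ∈ M := by
    convert M.add_mem hsub hM.one_mem using 1
    module
  refine mem_boundedBy_of_mem (N := K ^ 2) (by positivity) hM.one_mem (hM.sq_mem b) ?_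
  have hid : (K • (1 : A) + b) ^ 2 * (K • 1 - b) + (K • 1 - b) ^ 2 * (K • 1 + b)
      = (2 * K) • (K ^ 2 • 1 - b ^ 2) := by algebra
  have hmem := M.add_mem (hM.sq_mul_mem (K • 1 + b) _ hsub') (hM.sq_mul_mem (K • 1 - b) _ hadd')
  rw [hid] at hmem
  exact (M.smul_mem_iff (by positivity)).1 hmem

theorem IsQuadraticModule.mul_mem_boundedBy_one (hM : IsQuadraticModule M) {a b : A}
    (ha : a ∈ boundedBy M 1) (hb : b ∈ boundedBy M 1) : a * b ∈ boundedBy M 1 :=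
  mul_mem_of_forall_sq_mem (fun _ => hM.sq_mem_boundedBy_one) ha hb

theorem IsQuadraticModule.mem_boundedBy_one_of_sub_sq_mem (hM : IsQuadraticModule M) {a : A}
    {R : ℝ} (h : R • 1 - a ^ 2 ∈ M) : a ∈ boundedBy M 1 := by
  have hR := M.smul_mem (sub_nonneg.2 (le_abs_self R)) hM.one_mem
  have h2a : (2 : ℝ) • a ∈ boundedBy M 1 := by
    refine ⟨|R| + 1, by positivity, ?_, ?_⟩
    · convert M.add_mem (M.add_mem h (hM.sq_mem (a + 1))) hR using 1
      algebra
    · convert M.add_mem (M.add_mem h (hM.sq_mem (a - 1))) hR using 1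
      algebra
  simpa using (boundedBy M 1).smul_mem (2⁻¹ : ℝ) h2a

/-! ### An order unit for the square of an ideal -/

theorem IsQuadraticModule.exists_smul_sum_sq_sub_sq_mem (hM : IsQuadraticModule M)
    (harch : boundedBy M 1 = ⊤) (G : Finset A) {s : A} (hs : s ∈ Ideal.span (G : Set A)) :
    ∃ N : ℝ, 0 ≤ N ∧ N • ∑ g ∈ G, g ^ 2 - s ^ 2 ∈ M := by
  classical
  induction hs using Submodule.span_induction with
  | mem g hg =>
    refine ⟨1, zero_le_one, ?_⟩
    rw [one_smul, ← Finset.add_sum_erase _ _ (Finset.mem_coe.1 hg), add_sub_cancel_left]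
    exact sum_mem fun g _ => hM.sq_mem g
  | zero =>
    exact ⟨0, le_rfl, by simp⟩
  | add x y _ _ hx hy =>
    obtain ⟨N, hN, hx⟩ := hx
    obtain ⟨N', hN', hy⟩ := hy
    refine ⟨2 * N + 2 * N', by positivity, ?_⟩
    convert M.add_mem (M.smul_mem zero_le_two (M.add_mem hx hy)) (hM.sq_mem (x - y)) using 1
    algebra
  | smul a x _ hx =>
    obtain ⟨N, hN, hx⟩ := hx
    obtain ⟨B, hB, -, ha⟩ : a ^ 2 ∈ boundedBy M 1 := harch ▸ Submodule.mem_top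
    refine ⟨B * N, by positivity, ?_⟩
    convert M.add_mem (M.smul_mem hB hx) (hM.sq_mul_mem x _ ha) using 1
    rw [smul_eq_mul]
    algebra

variable {ι : Type*} {G : Finset A} {T : Finset ι} {h : ι → A}

/-- For suitable `h`, this is an order unit of the quadratic module on the ideal generated by the
products `g * g'` with `g, g' ∈ G` and the elements `h t`. -/
def squaresUnit (G : Finset A) (T : Finset ι) (h : ι → A) : A :=
  ∑ g ∈ G, g ^ 2 + ∑ t ∈ T, h t

theorem IsQuadraticModule.squaresUnit_mem (hM : IsQuadraticModule M) (hh : ∀ t ∈ T, h t ∈ M) :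
    squaresUnit G T h ∈ M :=
  M.add_mem (sum_mem fun g _ => hM.sq_mem g) (sum_mem hh)

theorem IsQuadraticModule.mem_boundedBy_squaresUnit (hM : IsQuadraticModule M)
    (hh : ∀ t ∈ T, h t ∈ M) {t : ι} (ht : t ∈ T) : h t ∈ boundedBy M (squaresUnit G T h) := by
  classical
  refine mem_boundedBy_of_mem zero_le_one (hM.squaresUnit_mem hh) (hh t ht) ?_
  rw [one_smul, squaresUnit, ← Finset.add_sum_erase _ _ ht, add_left_comm, add_sub_cancel_left]
  exact M.add_mem (sum_mem fun g _ => hM.sq_mem g)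
    (sum_mem fun t ht => hh t (Finset.mem_of_mem_erase ht))

theorem IsQuadraticModule.sq_mem_boundedBy_squaresUnit (hM : IsQuadraticModule M)
    (harch : boundedBy M 1 = ⊤) (hh : ∀ t ∈ T, h t ∈ M) {s : A}
    (hs : s ∈ Ideal.span (G : Set A)) : s ^ 2 ∈ boundedBy M (squaresUnit G T h) := by
  obtain ⟨N, hN, hsub⟩ := hM.exists_smul_sum_sq_sub_sq_mem harch G hs
  refine mem_boundedBy_of_mem hN (hM.squaresUnit_mem hh) (hM.sq_mem s) ?_
  convert M.add_mem hsub (M.smul_mem hN (sum_mem hh)) using 1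
  rw [squaresUnit]
  module

theorem IsQuadraticModule.mem_boundedBy_squaresUnit_of_mem_mul (hM : IsQuadraticModule M)
    (harch : boundedBy M 1 = ⊤) (hh : ∀ t ∈ T, h t ∈ M) {a : A}
    (ha : a ∈ Ideal.span (G : Set A) * Ideal.span (G : Set A)) :
    a ∈ boundedBy M (squaresUnit G T h) := by
  refine Submodule.mul_induction_on ha (fun s hs t ht => ?_) fun _ _ => Submodule.add_mem _
  exact mul_mem_of_forall_sq_mem (W := (Ideal.span (G : Set A)).restrictScalars ℝ)
    (fun s hs => hM.sq_mem_boundedBy_squaresUnit harch hh hs) hs ht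

theorem IsQuadraticModule.sq_mul_squaresUnit_mem_boundedBy (hM : IsQuadraticModule M)
    (harch : boundedBy M 1 = ⊤) (hh : ∀ t ∈ T, h t ∈ M)
    (hscalar : ∀ t ∈ T, ∀ a, ∃ r : ℝ,
      a * h t - r • h t ∈ Ideal.span (G : Set A) * Ideal.span (G : Set A)) (a : A) :
    a ^ 2 * squaresUnit G T h ∈ boundedBy M (squaresUnit G T h) := by
  have hexpand : a ^ 2 * squaresUnit G T h = ∑ g ∈ G, a ^ 2 * g ^ 2 + ∑ t ∈ T, a ^ 2 * h t := by
    rw [squaresUnit, mul_add, Finset.mul_sum, Finset.mul_sum]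
  rw [hexpand]
  refine Submodule.add_mem _ (sum_mem fun g hg => ?_) (sum_mem fun t ht => ?_)
  · rw [← mul_pow]
    exact hM.sq_mem_boundedBy_squaresUnit harch hh
      (Ideal.mul_mem_left _ _ (Ideal.subset_span hg))
  · obtain ⟨r, hr⟩ := hscalar t ht (a ^ 2)
    rw [← sub_add_cancel (a ^ 2 * h t) (r • h t)]
    exact Submodule.add_mem _ (hM.mem_boundedBy_squaresUnit_of_mem_mul harch hh hr)
      (Submodule.smul_mem _ _ (hM.mem_boundedBy_squaresUnit hh ht))

/-! ### Character states -/

/-- The elements bounded by `u` form an ideal as soon as all products `a ^ 2 * u` are bounded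
by `u`. -/
def boundedIdeal {u : A} (hM : IsQuadraticModule M) (hu : ∀ a, a ^ 2 * u ∈ boundedBy M u) :
    Ideal A where
  __ := (boundedBy M u).toAddSubmonoid
  smul_mem' a _ hb := mul_mem_of_forall_sq_mul_mem (S := boundedBy M u) (by
    rintro a b ⟨N, hN, hadd, hsub⟩
    obtain ⟨N', hN', -, hu'⟩ := hu a
    refine ⟨N * N', by positivity, ?_, ?_⟩
    · convert M.add_mem (hM.sq_mul_mem a _ hadd) (M.smul_mem hN hu') using 1
      algebra
    · convert M.add_mem (hM.sq_mul_mem a _ hsub) (M.smul_mem hN hu') using 1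
      algebra) a hb

/-- On the elements bounded by `u`, the functional `φ` is a state of `(M, u)` that is multiplicative
with respect to the character `χ`. Its values elsewhere are irrelevant; having `φ` defined on all
of `A` makes it linear without side conditions. -/
structure IsCharacterState (M : PointedCone ℝ A) (u : A) (χ : A →ₐ[ℝ] ℝ) (φ : A →ₗ[ℝ] ℝ) :
    Prop where
  nonneg : ∀ b ∈ M, b ∈ boundedBy M u → 0 ≤ φ b
  map_unit : φ u = 1
  map_mul : ∀ a, ∀ b ∈ boundedBy M u, φ (a * b) = χ a * φ b

theorem IsQuadraticModule.exists_isCharacterState {u : A} (hM : IsQuadraticModule M)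
    (hu : ∀ a, a ^ 2 * u ∈ boundedBy M u) {p : A} (hp : p ∈ boundedBy M u) (hpM : p ∉ M) :
    ∃ χ φ, IsCharacterState M u χ φ ∧ φ p ≤ 0 := by
  let J : Ideal A := boundedIdeal hM hu
  let unit : J := ⟨u, show u ∈ boundedBy M u by simpa using hu 1⟩
  let ι : J →ₗ[ℝ] A := J.subtype.restrictScalars ℝ
  have hunit : IsOrderUnit (M.comap ι) unit := fun b => by
    obtain ⟨N, hN, hadd, -⟩ := b.2
    exact ⟨N, hN, hadd⟩
  have hsq : ∀ (a : A), ∀ b ∈ M.comap ι, a ^ 2 • b ∈ M.comap ι := fun a b hb =>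
    hM.sq_mul_mem a _ hb
  obtain ⟨L, hL, hLp⟩ := exists_isPureState_apply_nonpos (p := ⟨p, hp⟩) hunit hpM
  obtain ⟨χ, hχ⟩ := hL.exists_algHom hsq hunit
  obtain ⟨φ, hφ⟩ := LinearMap.exists_leftInverse_of_injective ι
    (LinearMap.ker_eq_bot.2 Subtype.val_injective)
  have hLφ : ∀ b (hb : b ∈ J), (L ∘ₗ φ) b = L ⟨b, hb⟩ := fun b hb =>
    congrArg L (LinearMap.congr_fun hφ ⟨b, hb⟩)
  refine ⟨χ, L ∘ₗ φ, ⟨fun b hbM hb => ?_, ?_, fun a b hb => ?_⟩, ?_⟩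
  · exact hLφ b hb ▸ hL.isState.nonneg _ hbM
  · exact hLφ u unit.2 ▸ hL.isState.map_unit
  · rw [hLφ _ (J.mul_mem_left a hb), hLφ b hb]
    exact hχ a ⟨b, hb⟩
  · exact hLφ p hp ▸ hLp

end QuadraticModule

/-! ### The quadratic module of the constraints -/

section ConstraintCone

variable {n : ℕ} {E I : Finset ℕ} {c : ℕ → RPoly n} {p q : RPoly n}

theorem IsSOS.zero : IsSOS (0 : RPoly n) := ⟨[], by simp⟩

theorem IsSOS.sq (a : RPoly n) : IsSOS (a ^ 2) := ⟨[a], by simp⟩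

theorem IsSOS.add (hp : IsSOS p) (hq : IsSOS q) : IsSOS (p + q) := by
  obtain ⟨L, rfl⟩ := hp
  obtain ⟨L', rfl⟩ := hq
  exact ⟨L ++ L', by simp⟩

theorem IsSOS.sq_mul (a : RPoly n) (hp : IsSOS p) : IsSOS (a ^ 2 * p) := by
  obtain ⟨L, rfl⟩ := hp
  refine ⟨L.map (a * ·), ?_⟩
  simp only [List.map_map, Function.comp_def, mul_pow, List.sum_map_mul_left]

theorem IsSOS.eval_nonneg (hp : IsSOS p) (x : Fin n → ℝ) : 0 ≤ eval x p := by
  obtain ⟨L, rfl⟩ := hp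
  rw [map_list_sum]
  refine List.sum_nonneg ?_
  simp only [List.map_map, List.mem_map, Function.comp_apply, map_pow]
  rintro _ ⟨q, -, rfl⟩
  positivity

theorem mem_IdealFull_iff : p ∈ IdealFull E c ↔ ∃ q : ℕ → RPoly n, p = ∑ j ∈ E, c j * q j := by
  simp only [IdealFull, SetLike.mem_coe, Ideal.span, smul_eq_mul, mul_comm, eq_comm (a := p),
    Submodule.mem_span_image_finset_iff_exists_fun']

theorem sq_mul_mem_IdealFull_add_QModFull (a : RPoly n)
    (hp : ∃ p₁ ∈ IdealFull E c, ∃ p₂ ∈ QModFull I c, p = p₁ + p₂) :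
    ∃ p₁ ∈ IdealFull E c, ∃ p₂ ∈ QModFull I c, a ^ 2 * p = p₁ + p₂ := by
  obtain ⟨p₁, hp₁, _, ⟨σ₀, σ, hσ₀, hσ, rfl⟩, rfl⟩ := hp
  refine ⟨a ^ 2 * p₁, Ideal.mul_mem_left _ _ hp₁, _,
    ⟨a ^ 2 * σ₀, fun j => a ^ 2 * σ j, hσ₀.sq_mul a, fun j hj => (hσ j hj).sq_mul a, rfl⟩, ?_⟩
  simp only [mul_add, Finset.mul_sum, mul_left_comm]

/-- The cone `Ideal(c_eq) + QM(c_in)`. -/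
def constraintCone (E I : Finset ℕ) (c : ℕ → RPoly n) : PointedCone ℝ (RPoly n) where
  carrier := {p | ∃ p₁ ∈ IdealFull E c, ∃ p₂ ∈ QModFull I c, p = p₁ + p₂}
  zero_mem' := ⟨0, Ideal.zero_mem _, 0, ⟨0, 0, IsSOS.zero, fun _ _ => IsSOS.zero, by simp⟩,
    by simp⟩
  add_mem' := by
    rintro _ _ ⟨p₁, hp₁, _, ⟨σ₀, σ, hσ₀, hσ, rfl⟩, rfl⟩ ⟨q₁, hq₁, _, ⟨τ₀, τ, hτ₀, hτ, rfl⟩, rfl⟩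
    refine ⟨p₁ + q₁, Ideal.add_mem _ hp₁ hq₁, _,
      ⟨σ₀ + τ₀, σ + τ, hσ₀.add hτ₀, fun j hj => (hσ j hj).add (hτ j hj), rfl⟩, ?_⟩
    simp only [Pi.add_apply, mul_add, Finset.sum_add_distrib]
    ring
  smul_mem' r p hp := by
    have hr : r • p = (C √(r : ℝ)) ^ 2 * p := by
      rw [← map_pow, Real.sq_sqrt r.2, ← smul_eq_C_mul]
      rfl
    rw [hr]
    exact sq_mul_mem_IdealFull_add_QModFull _ hp

theorem mem_constraintCone :
    p ∈ constraintCone E I c ↔ ∃ p₁ ∈ IdealFull E c, ∃ p₂ ∈ QModFull I c, p = p₁ + p₂ :=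
  Iff.rfl

theorem isQuadraticModule_constraintCone (E I : Finset ℕ) (c : ℕ → RPoly n) :
    IsQuadraticModule (constraintCone E I c) where
  one_mem := ⟨0, Ideal.zero_mem _, 1,
    ⟨1, 0, by simpa only [one_pow] using IsSOS.sq 1, fun _ _ => IsSOS.zero, by simp⟩, by simp⟩
  sq_mul_mem a _ hb := sq_mul_mem_IdealFull_add_QModFull a hb

theorem mul_mem_constraintCone {j : ℕ} (hj : j ∈ E) (q : RPoly n) :
    q * c j ∈ constraintCone E I c :=
  ⟨q * c j, Ideal.mul_mem_left _ _ (Ideal.subset_span ⟨j, hj, rfl⟩), 0,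
    ⟨0, 0, IsSOS.zero, fun _ _ => IsSOS.zero, by simp⟩, by simp⟩

theorem mem_constraintCone_of_mem {j : ℕ} (hj : j ∈ I) : c j ∈ constraintCone E I c := by
  classical
  refine ⟨0, Ideal.zero_mem _, c j,
    ⟨0, fun i => (if i = j then 1 else 0) ^ 2, IsSOS.zero, fun _ _ => IsSOS.sq _, ?_⟩, by simp⟩
  simp [hj]

theorem eval_nonneg_of_mem_constraintCone (hp : p ∈ constraintCone E I c) {x : Fin n → ℝ}
    (hx : x ∈ Kset E I c) : 0 ≤ eval x p := by
  obtain ⟨_, hp₁, _, ⟨σ₀, σ, hσ₀, hσ, rfl⟩, rfl⟩ := hp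
  obtain ⟨q, rfl⟩ := mem_IdealFull_iff.1 hp₁
  simp only [map_add, map_sum, map_mul]
  rw [Finset.sum_eq_zero fun j hj => by rw [hx.1 j hj, zero_mul], zero_add]
  exact add_nonneg (hσ₀.eval_nonneg x)
    (Finset.sum_nonneg fun j hj => mul_nonneg (hx.2 j hj) ((hσ j hj).eval_nonneg x))

theorem isClosed_Kset : IsClosed (Kset E I c) := by
  simp only [Kset, Set.ofPred_and, Set.ofPred_forall]
  exact (isClosed_biInter fun j _ => isClosed_eq (continuous_eval _) continuous_const).inter
    (isClosed_biInter fun j _ => isClosed_le continuous_const (continuous_eval _))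

theorem ArchimedeanQM.isCompact_Kset (harch : ArchimedeanQM E I c) : IsCompact (Kset E I c) := by
  obtain ⟨R, -, hR⟩ := harch
  refine Metric.isCompact_of_isClosed_isBounded isClosed_Kset
    ((Metric.isBounded_closedBall (x := (0 : Fin n → ℝ)) (r := √R)).subset fun x hx => ?_)
  have hsum := eval_nonneg_of_mem_constraintCone hR hx
  simp only [map_sub, eval_C, map_sum, map_pow, eval_X, sub_nonneg] at hsum
  rw [mem_closedBall_zero_iff, pi_norm_le_iff_of_nonneg (Real.sqrt_nonneg _)]
  exact fun i => Real.abs_le_sqrt <|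
    (Finset.single_le_sum (f := fun i => x i ^ 2) (fun j _ => sq_nonneg _)
      (Finset.mem_univ i)).trans hsum

theorem ArchimedeanQM.boundedBy_one_eq_top (harch : ArchimedeanQM E I c) :
    boundedBy (constraintCone E I c) 1 = ⊤ := by
  have hM := isQuadraticModule_constraintCone E I c
  obtain ⟨R, -, hR⟩ := harch
  have hX : ∀ i, (X i : RPoly n) ∈ boundedBy (constraintCone E I c) 1 := fun i => by
    refine hM.mem_boundedBy_one_of_sub_sq_mem (R := R) ?_
    convert add_mem (mem_constraintCone.2 hR) (Submodule.sum_mem _ fun j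
      (_ : j ∈ Finset.univ.erase i) => hM.sq_mem (X j : RPoly n)) using 1
    rw [← Finset.add_sum_erase _ _ (Finset.mem_univ i), smul_eq_C_mul]
    ring
  refine (Submodule.eq_top_iff').2 fun q => ?_
  induction q using MvPolynomial.induction_on with
  | C a =>
    rw [← mul_one (C a), ← smul_eq_C_mul]
    exact Submodule.smul_mem _ _ (self_mem_boundedBy hM.one_mem)
  | add p q hp hq => exact add_mem hp hq
  | mul_X p i hp => exact hM.mul_mem_boundedBy_one hp (hX i)

end ConstraintCone

/-! ### Taylor expansion and strict optimality conditions -/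

section Taylor

variable {n : ℕ}

theorem exists_eq_C_add_sum_sub_mul (z : Fin n → ℝ) (q : RPoly n) :
    ∃ q' : Fin n → RPoly n, q = C (eval z q) + ∑ k, (X k - C (z k)) * q' k := by
  classical
  induction q using MvPolynomial.induction_on with
  | C a => exact ⟨0, by simp⟩
  | add p q hp hq =>
    obtain ⟨p', hp⟩ := hp
    obtain ⟨q', hq⟩ := hq
    refine ⟨p' + q', ?_⟩
    simp only [Pi.add_apply, mul_add, Finset.sum_add_distrib, map_add]
    linear_combination hp + hq
  | mul_X p i hp =>
    obtain ⟨p', hp⟩ := hp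
    refine ⟨fun k => p' k * X i + if k = i then C (eval z p) else 0, ?_⟩
    simp only [mul_add, Finset.sum_add_distrib, map_mul, eval_X, mul_ite, mul_zero,
      Finset.sum_ite_eq', Finset.mem_univ, if_true, ← mul_assoc, ← Finset.sum_mul]
    linear_combination X i * hp

theorem pderiv_sum_sub_mul (z : Fin n → ℝ) (q' : Fin n → RPoly n) (k : Fin n) :
    pderiv k (∑ l, (X l - C (z l)) * q' l) = q' k + ∑ l, (X l - C (z l)) * pderiv k (q' l) := by
  simp [Derivation.leibniz, pderiv_X, Pi.single_apply, Finset.sum_add_distrib, add_comm]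

theorem exists_eq_C_add_sum_sub_mul_gradP (z : Fin n → ℝ) (q : RPoly n) :
    ∃ q' : Fin n → RPoly n, q = C (eval z q) + ∑ k, (X k - C (z k)) * q' k ∧
      ∀ k, eval z (q' k) = gradP q z k := by
  obtain ⟨q', hq⟩ := exists_eq_C_add_sum_sub_mul z q
  refine ⟨q', hq, fun k => ?_⟩
  rw [gradP, hq, map_add, pderiv_C, pderiv_sum_sub_mul]
  simp

theorem exists_eq_half_sum_sub_mul_sub_mul_hessP (z : Fin n → ℝ) {q : RPoly n}
    (hq : eval z q = 0) (hgrad : gradP q z = 0) : ∃ r : Fin n → Fin n → RPoly n,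
    q = (1 / 2 : ℝ) • ∑ k, ∑ l, (X k - C (z k)) * (X l - C (z l)) * r k l ∧
    ∀ k l, eval z (r k l) = hessP q z k l := by
  obtain ⟨q', hq', hgrad'⟩ := exists_eq_C_add_sum_sub_mul_gradP z q
  choose r hr hrgrad using fun k => exists_eq_C_add_sum_sub_mul_gradP z (q' k)
  simp only [hq, hgrad', hgrad, Pi.zero_apply, map_zero, zero_add] at hq' hr
  have hqr : q = ∑ k, ∑ l, (X k - C (z k)) * (X l - C (z l)) * r k l := by
    rw [hq']
    refine Finset.sum_congr rfl fun k _ => ?_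
    rw [hr k, Finset.mul_sum]
    simp only [mul_assoc]
  have hqr' : q = ∑ k, ∑ l, (X k - C (z k)) * (X l - C (z l)) * r l k := by
    rw [hqr, Finset.sum_comm]
    exact Finset.sum_congr rfl fun k _ => Finset.sum_congr rfl fun l _ => by ring
  refine ⟨fun k l => r k l + r l k, ?_, fun k l => ?_⟩
  · simp only [mul_add, Finset.sum_add_distrib, ← hqr, ← hqr']
    module
  · rw [hessP, hq', pderiv_sum_sub_mul, map_add, map_add, map_add, pderiv_sum_sub_mul, hrgrad,
      hrgrad]
    simp [add_comm, gradP]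

end Taylor

section OptimalityConditions

variable {n : ℕ} {E I : Finset ℕ} {c : ℕ → RPoly n} {p : RPoly n} {u : Fin n → ℝ}
  {lamE lamI : ℕ → ℝ}

/-- The Lagrangian of minimizing `p` subject to `c j = 0` (`j ∈ E`), `c j ≥ 0` (`j ∈ I`). -/
noncomputable def lagrangian (E I : Finset ℕ) (c : ℕ → RPoly n) (p : RPoly n)
    (lamE lamI : ℕ → ℝ) : RPoly n :=
  p - ∑ j ∈ E, lamE j • c j - ∑ j ∈ I, lamI j • c j

/-- The indices of the constraints that are active at a feasible point `u`. -/
def activeSet (E I : Finset ℕ) (c : ℕ → RPoly n) (u : Fin n → ℝ) : Set ℕ :=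
  {j | j ∈ E ∨ j ∈ I ∧ eval u (c j) = 0}

/-- The KKT conditions at `u` with multipliers `lamE`, `lamI`, together with strict complementarity
and the second order sufficient condition. -/
structure IsStrictKKT (E I : Finset ℕ) (c : ℕ → RPoly n) (p : RPoly n) (u : Fin n → ℝ)
    (lamE lamI : ℕ → ℝ) : Prop where
  gradP_eq_zero : gradP (lagrangian E I c p lamE lamI) u = 0
  nonneg : ∀ j ∈ I, 0 ≤ lamI j
  mul_eval_eq_zero : ∀ j ∈ I, lamI j * eval u (c j) = 0
  pos_of_active : ∀ j ∈ I, eval u (c j) = 0 → 0 < lamI j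
  hess_pos : ∀ v : Fin n → ℝ, v ≠ 0 → (∀ j ∈ activeSet E I c u, v ⬝ᵥ gradP (c j) u = 0) →
    0 < v ⬝ᵥ (Matrix.of (hessP (lagrangian E I c p lamE lamI) u)).mulVec v

theorem OptCondsAt.exists_isStrictKKT (h : OptCondsAt E c I c p u) :
    ∃ lamE lamI, IsStrictKKT E I c p u lamE lamI := by
  obtain ⟨-, lamE, lamI, hstat, hcompl, hstrict, hsosc⟩ := h
  refine ⟨lamE, lamI, funext fun k => ?_, fun j hj => (hcompl j hj).1,
    fun j hj => (hcompl j hj).2, fun j hj h0 => by simpa [h0] using hstrict j hj,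
    fun v hv hactive => ?_⟩
  · have := congrFun hstat k
    simp only [gradP, Pi.add_apply, Finset.sum_apply, Pi.smul_apply, smul_eq_mul] at this
    simp [gradP, lagrangian, this]
  · refine (hsosc v hv (fun j hj => hactive j (.inl hj))
      fun j hj h0 => hactive j (.inr ⟨hj, h0⟩)).trans_eq ?_
    simp [dotProduct, Matrix.mulVec, hessP, lagrangian, Finset.mul_sum, mul_assoc]

theorem eval_lagrangian (hu : u ∈ Kset E I c) (lamE lamI : ℕ → ℝ) :
    eval u (lagrangian E I c p lamE lamI) = eval u p - ∑ j ∈ I, lamI j * eval u (c j) := by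
  simp only [lagrangian, map_sub, map_sum, smul_eval]
  rw [Finset.sum_eq_zero fun j hj => by rw [hu.1 j hj, mul_zero], sub_zero]

theorem IsStrictKKT.eval_lagrangian_eq_zero (h : IsStrictKKT E I c p u lamE lamI)
    (hu : u ∈ Kset E I c) (hp : eval u p = 0) : eval u (lagrangian E I c p lamE lamI) = 0 := by
  rw [eval_lagrangian hu, hp, Finset.sum_eq_zero h.mul_eval_eq_zero, sub_zero]

end OptimalityConditions

/-! ### Isolatedness of the zeros -/

section TendstoAlong

open Filter Topology

/-- The sequence `y` converges to `z`, and its normalized directions converge to `v`. -/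
structure TendstoAlong {F : Type*} [NormedAddCommGroup F] [NormedSpace ℝ F] (y : ℕ → F)
    (z v : F) : Prop where
  tendsto : Tendsto y atTop (𝓝 z)
  tendsto_direction : Tendsto (fun k => ‖y k - z‖⁻¹ • (y k - z)) atTop (𝓝 v)

theorem exists_tendstoAlong_of_accPt {F : Type*} [NormedAddCommGroup F] [NormedSpace ℝ F]
    [ProperSpace F] {S : Set F} {z : F} (hz : AccPt z (𝓟 S)) :
    ∃ y v, (∀ k, y k ∈ S) ∧ v ≠ 0 ∧ TendstoAlong y z v := by
  rw [accPt_principal_iff_clusterPt, ← mem_closure_iff_clusterPt, mem_closure_iff_seq_limit] at hz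
  obtain ⟨x, hxS, hxz⟩ := hz
  have hnorm : ∀ k, ‖x k - z‖ ≠ 0 := fun k => norm_ne_zero_iff.2 (sub_ne_zero.2 (hxS k).2)
  obtain ⟨v, hv, s, hs, hsv⟩ := (isCompact_sphere (0 : F) 1).tendsto_subseq
    (x := fun k => ‖x k - z‖⁻¹ • (x k - z)) fun k => by
      rw [mem_sphere_zero_iff_norm, norm_smul, norm_inv, norm_norm, inv_mul_cancel₀ (hnorm k)]
  exact ⟨x ∘ s, v, fun k => (hxS (s k)).1, ne_zero_of_mem_unit_sphere (⟨v, hv⟩ : Metric.sphere _ _),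
    hxz.comp hs.tendsto_atTop, hsv⟩

variable {n : ℕ} {q : RPoly n} {y : ℕ → Fin n → ℝ} {z v : Fin n → ℝ}

theorem TendstoAlong.tendsto_eval (h : TendstoAlong y z v) (q : RPoly n) :
    Tendsto (fun k => eval (y k) q) atTop (𝓝 (eval z q)) :=
  ((continuous_eval q).tendsto z).comp h.tendsto

theorem TendstoAlong.tendsto_direction_apply (h : TendstoAlong y z v) (i : Fin n) :
    Tendsto (fun k => ‖y k - z‖⁻¹ * (y k i - z i)) atTop (𝓝 (v i)) :=
  tendsto_pi_nhds.1 h.tendsto_direction i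

theorem TendstoAlong.tendsto_inv_norm_mul_eval (h : TendstoAlong y z v) (hq : eval z q = 0) :
    Tendsto (fun k => ‖y k - z‖⁻¹ * eval (y k) q) atTop (𝓝 (v ⬝ᵥ gradP q z)) := by
  obtain ⟨q', hq', hgrad⟩ := exists_eq_C_add_sum_sub_mul_gradP z q
  have hlim : Tendsto (fun k => ∑ i, ‖y k - z‖⁻¹ * (y k i - z i) * eval (y k) (q' i)) atTop
      (𝓝 (v ⬝ᵥ gradP q z)) := by
    simp only [dotProduct, ← hgrad]
    exact tendsto_finsetSum _ fun i _ => (h.tendsto_direction_apply i).mul (h.tendsto_eval (q' i))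
  refine hlim.congr fun k => ?_
  conv_rhs => rw [hq', hq]
  simp [Finset.mul_sum, mul_assoc]

theorem TendstoAlong.tendsto_inv_norm_sq_mul_eval (h : TendstoAlong y z v) (hq : eval z q = 0)
    (hgrad : gradP q z = 0) :
    Tendsto (fun k => ‖y k - z‖⁻¹ ^ 2 * eval (y k) q) atTop
      (𝓝 (1 / 2 * (v ⬝ᵥ (Matrix.of (hessP q z)).mulVec v))) := by
  obtain ⟨r, hr, hhess⟩ := exists_eq_half_sum_sub_mul_sub_mul_hessP z hq hgrad
  have hlim : Tendsto (fun k => 1 / 2 * ∑ i, ∑ j, ‖y k - z‖⁻¹ * (y k i - z i) *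
      (eval (y k) (r i j) * (‖y k - z‖⁻¹ * (y k j - z j)))) atTop
      (𝓝 (1 / 2 * (v ⬝ᵥ (Matrix.of (hessP q z)).mulVec v))) := by
    simp only [dotProduct, Matrix.mulVec, Matrix.of_apply, ← hhess, Finset.mul_sum]
    exact tendsto_finsetSum _ fun i _ => tendsto_finsetSum _ fun j _ =>
      tendsto_const_nhds.mul ((h.tendsto_direction_apply i).mul
        ((h.tendsto_eval (r i j)).mul (h.tendsto_direction_apply j)))
  refine hlim.congr fun k => ?_
  conv_rhs => rw [hr]
  simp only [smul_eval, map_sum, map_mul, map_sub, eval_X, eval_C, Finset.mul_sum]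
  exact Finset.sum_congr rfl fun i _ => Finset.sum_congr rfl fun j _ => by ring

variable {E I : Finset ℕ} {c : ℕ → RPoly n} {p : RPoly n} {lamE lamI : ℕ → ℝ}

theorem IsStrictKKT.mul_eval_le_neg_eval_lagrangian (h : IsStrictKKT E I c p z lamE lamI)
    {x : Fin n → ℝ} (hx : x ∈ Kset E I c) (hxp : eval x p = 0) {j : ℕ} (hj : j ∈ I) :
    lamI j * eval x (c j) ≤ -eval x (lagrangian E I c p lamE lamI) := by
  rw [eval_lagrangian hx, hxp, zero_sub, neg_neg]
  exact Finset.single_le_sum (f := fun j => lamI j * eval x (c j))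
    (fun j hj => mul_nonneg (h.nonneg j hj) (hx.2 j hj)) hj

theorem IsStrictKKT.eval_lagrangian_nonpos (h : IsStrictKKT E I c p z lamE lamI)
    {x : Fin n → ℝ} (hx : x ∈ Kset E I c) (hxp : eval x p = 0) :
    eval x (lagrangian E I c p lamE lamI) ≤ 0 := by
  rw [eval_lagrangian hx, hxp, zero_sub, Left.neg_nonpos_iff]
  exact Finset.sum_nonneg fun j hj => mul_nonneg (h.nonneg j hj) (hx.2 j hj)

theorem IsStrictKKT.dotProduct_gradP_eq_zero (h : IsStrictKKT E I c p z lamE lamI)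
    (hzK : z ∈ Kset E I c) (hzp : eval z p = 0) (hy : ∀ k, y k ∈ Kset E I c)
    (hyp : ∀ k, eval (y k) p = 0) (hyz : TendstoAlong y z v) {j : ℕ}
    (hj : j ∈ activeSet E I c z) : v ⬝ᵥ gradP (c j) z = 0 := by
  rcases hj with hj | ⟨hj, hj0⟩
  · refine tendsto_nhds_unique (hyz.tendsto_inv_norm_mul_eval (hzK.1 j hj)) ?_
    simp [(hy _).1 j hj]
  · have hL := (hyz.tendsto_inv_norm_mul_eval (h.eval_lagrangian_eq_zero hzK hzp)).neg
    rw [h.gradP_eq_zero, dotProduct_zero, neg_zero] at hL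
    have hsqueeze := squeeze_zero (f := fun k => lamI j * (‖y k - z‖⁻¹ * eval (y k) (c j)))
      (fun k => mul_nonneg (h.nonneg j hj) (mul_nonneg (by positivity) ((hy k).2 j hj)))
      (fun k => by
        rw [mul_left_comm, ← mul_neg]
        gcongr
        exact h.mul_eval_le_neg_eval_lagrangian (hy k) (hyp k) hj) hL
    have hlim := (hyz.tendsto_inv_norm_mul_eval hj0).const_mul (lamI j)
    exact (mul_eq_zero.1 (tendsto_nhds_unique hlim hsqueeze)).resolve_left
      (h.pos_of_active j hj hj0).ne'

theorem IsStrictKKT.not_accPt (h : IsStrictKKT E I c p z lamE lamI) (hzK : z ∈ Kset E I c)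
    (hzp : eval z p = 0) : ¬AccPt z (𝓟 {x ∈ Kset E I c | eval x p = 0}) := by
  intro hacc
  obtain ⟨y, v, hyS, hv, hyz⟩ := exists_tendstoAlong_of_accPt hacc
  have hpos := h.hess_pos v hv fun j =>
    h.dotProduct_gradP_eq_zero hzK hzp (fun k => (hyS k).1) (fun k => (hyS k).2) hyz
  have hlim := hyz.tendsto_inv_norm_sq_mul_eval (h.eval_lagrangian_eq_zero hzK hzp)
    h.gradP_eq_zero
  have hnonpos := le_of_tendsto' hlim fun k => mul_nonpos_of_nonneg_of_nonpos (sq_nonneg _)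
    (h.eval_lagrangian_nonpos (hyS k).1 (hyS k).2)
  linarith

theorem finite_zeros_of_isStrictKKT (hK : IsCompact (Kset E I c))
    (hKKT : ∀ u ∈ Kset E I c, eval u p = 0 → ∃ lamE lamI, IsStrictKKT E I c p u lamE lamI) :
    {x ∈ Kset E I c | eval x p = 0}.Finite := by
  by_contra hinf
  have hclosed : IsClosed {x ∈ Kset E I c | eval x p = 0} :=
    hK.isClosed.inter (isClosed_eq (continuous_eval p) continuous_const)
  obtain ⟨z, hzK, hz⟩ := Set.Infinite.exists_accPt_of_subset_isCompact hinf hK fun x hx => hx.1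
  have hzp := (hclosed.closure_subset (mem_closure_iff_clusterPt.2 hz.clusterPt)).2
  obtain ⟨lamE, lamI, hzKKT⟩ := hKKT z hzK hzp
  exact hzKKT.not_accPt hzK hzp hz

end TendstoAlong

/-! ### Characters and evaluation points -/

section CharacterState

variable {A : Type*} [CommRing A] [Algebra ℝ A] {M : PointedCone ℝ A} {u : A} {χ : A →ₐ[ℝ] ℝ}
  {φ : A →ₗ[ℝ] ℝ}

theorem mem_boundedBy_of_neg_mem {b : A} (hb : b ∈ M) (hneg : -b ∈ M) : b ∈ boundedBy M u :=
  ⟨0, le_rfl, by simpa, by simpa⟩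

theorem IsCharacterState.apply_eq_zero_of_neg_mem (hφ : IsCharacterState M u χ φ) {b : A}
    (hb : b ∈ M) (hneg : -b ∈ M) : φ b = 0 := by
  have hbdd : b ∈ boundedBy M u := mem_boundedBy_of_neg_mem hb hneg
  have hnonpos := hφ.nonneg _ hneg (neg_mem hbdd)
  rw [map_neg] at hnonpos
  exact le_antisymm (neg_nonneg.1 hnonpos) (hφ.nonneg b hb hbdd)

theorem IsCharacterState.mul_apply_comm (hφ : IsCharacterState M u χ φ) {a b : A}
    (ha : a ∈ boundedBy M u) (hb : b ∈ boundedBy M u) : χ a * φ b = χ b * φ a := by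
  rw [← hφ.map_mul a b hb, ← hφ.map_mul b a ha, mul_comm]

theorem IsCharacterState.apply_sq_pos (hM : IsQuadraticModule M)
    (hu : ∀ a, a ^ 2 * u ∈ boundedBy M u) (hφ : IsCharacterState M u χ φ) {s : A}
    (hs : s ^ 2 ∈ boundedBy M u) (hχ : χ s ≠ 0) : 0 < φ (s ^ 2) := by
  have hu' : u ∈ boundedBy M u := by simpa using hu 1
  have hcomm := hφ.mul_apply_comm hs hu'
  rw [hφ.map_unit, mul_one, map_pow] at hcomm
  refine (hφ.nonneg _ (hM.sq_mem s) hs).lt_of_ne' fun h0 => ?_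
  rw [h0, mul_zero] at hcomm
  exact hχ (pow_eq_zero_iff two_ne_zero |>.1 hcomm)

theorem IsCharacterState.character_nonneg (hM : IsQuadraticModule M)
    (hu : ∀ a, a ^ 2 * u ∈ boundedBy M u) (hφ : IsCharacterState M u χ φ) {s : A}
    (hs : s ^ 2 ∈ boundedBy M u) (hχ : χ s ≠ 0) {a : A} (ha : a ∈ M) : 0 ≤ χ a := by
  have hbdd : a * s ^ 2 ∈ boundedBy M u := (boundedIdeal hM hu).mul_mem_left a hs
  have hnonneg := hφ.nonneg _ (mul_comm (s ^ 2) a ▸ hM.sq_mul_mem s a ha) hbdd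
  rw [hφ.map_mul a _ hs] at hnonneg
  exact nonneg_of_mul_nonneg_left hnonneg (hφ.apply_sq_pos hM hu hs hχ)

end CharacterState

section Interpolation

variable {n : ℕ}

theorem sum_sub_sq_ne_zero {z w : Fin n → ℝ} (h : z ≠ w) : ∑ i, (z i - w i) ^ 2 ≠ 0 := by
  obtain ⟨i, hi⟩ := Function.ne_iff.1 h
  refine (Finset.sum_pos' (fun i _ => sq_nonneg _) ⟨i, Finset.mem_univ i, ?_⟩).ne'
  exact sq_pos_of_ne_zero (sub_ne_zero.2 hi)

open Classical in
/-- The interpolation polynomial equal to `1` at `z` and to `0` at the other points of `Z`. -/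
noncomputable def lagrangeBasis (Z : Finset (Fin n → ℝ)) (z : Fin n → ℝ) : RPoly n :=
  ∏ w ∈ Z.erase z, (∑ i, (z i - w i) ^ 2)⁻¹ • ∑ i, (X i - C (w i)) ^ 2

theorem eval_lagrangeBasis_self (Z : Finset (Fin n → ℝ)) (z : Fin n → ℝ) :
    eval z (lagrangeBasis Z z) = 1 := by
  rw [lagrangeBasis, map_prod]
  refine Finset.prod_eq_one fun w hw => ?_
  simp only [smul_eval, map_sum, map_pow, map_sub, eval_X, eval_C]
  exact inv_mul_cancel₀ (sum_sub_sq_ne_zero (Finset.ne_of_mem_erase hw).symm)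

theorem eval_lagrangeBasis_of_ne {Z : Finset (Fin n → ℝ)} {z w : Fin n → ℝ} (hw : w ∈ Z)
    (hwz : w ≠ z) : eval w (lagrangeBasis Z z) = 0 := by
  classical
  rw [lagrangeBasis, map_prod]
  exact Finset.prod_eq_zero (Finset.mem_erase.2 ⟨hwz, hw⟩) (by simp)

theorem exists_mem_vanishingIdeal_eval_ne_zero {Z : Finset (Fin n → ℝ)} {x : Fin n → ℝ}
    (hx : x ∉ Z) : ∃ s ∈ vanishingIdeal ℝ (Z : Set (Fin n → ℝ)), eval x s ≠ 0 := by
  classical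
  refine ⟨lagrangeBasis (insert x Z) x, mem_vanishingIdeal_iff.2 fun z hz => ?_, ?_⟩
  · rw [aeval_eq_eval]
    exact eval_lagrangeBasis_of_ne (Finset.mem_insert_of_mem hz) (ne_of_mem_of_not_mem hz hx)
  · simp [eval_lagrangeBasis_self]

theorem lagrangeBasis_mul_mem_vanishingIdeal {Z : Finset (Fin n → ℝ)} {z : Fin n → ℝ} {s : RPoly n}
    (hs : eval z s = 0) :
    lagrangeBasis Z z * s ∈ vanishingIdeal ℝ (Z : Set (Fin n → ℝ)) := by
  refine mem_vanishingIdeal_iff.2 fun w hw => ?_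
  rw [aeval_eq_eval]
  by_cases hwz : w = z
  · simp [hwz, hs]
  · simp [eval_lagrangeBasis_of_ne hw hwz]

theorem one_sub_sum_sq_lagrangeBasis_mem (Z : Finset (Fin n → ℝ)) :
    1 - ∑ z ∈ Z, lagrangeBasis Z z ^ 2 ∈ vanishingIdeal ℝ (Z : Set (Fin n → ℝ)) := by
  refine mem_vanishingIdeal_iff.2 fun w hw => ?_
  rw [aeval_eq_eval]
  simp only [map_sub, map_one, map_sum, map_pow]
  rw [Finset.sum_eq_single_of_mem w hw fun z _ hzw => by
    rw [eval_lagrangeBasis_of_ne hw hzw.symm, zero_pow two_ne_zero], eval_lagrangeBasis_self]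
  norm_num

end Interpolation

/-! ### The covariance matrix of a character state -/

open scoped MatrixOrder in
theorem eq_zero_of_trace_mul_nonpos {ι : Type*} [Fintype ι] {G : Set (ι → ℝ)}
    {H B : Matrix ι ι ℝ} (hB : B.PosSemidef) (hG : ∀ g ∈ G, B.mulVec g = 0)
    (hH : ∀ v : ι → ℝ, v ≠ 0 → (∀ g ∈ G, v ⬝ᵥ g = 0) → 0 < v ⬝ᵥ H.mulVec v)
    (htrace : (H * B).trace ≤ 0) : B = 0 := by
  classical
  obtain ⟨S, rfl⟩ := CStarAlgebra.nonneg_iff_eq_star_mul_self.1 hB.nonneg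
  rw [Matrix.star_eq_conjTranspose] at *
  have hrow : ∀ m, ∀ g ∈ G, S m ⬝ᵥ g = 0 := fun m g hg =>
    congrFun ((Matrix.conjTranspose_mul_self_mulVec_eq_zero S g).1 (hG g hg)) m
  have hsum : (H * (S.conjTranspose * S)).trace = ∑ m, S m ⬝ᵥ H.mulVec (S m) := by
    rw [← Matrix.mul_assoc, Matrix.trace_mul_comm, ← Matrix.mul_assoc, Matrix.mul_assoc]
    rfl
  have hnonneg : ∀ m, 0 ≤ S m ⬝ᵥ H.mulVec (S m) := fun m => by
    by_cases hm : S m = 0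
    · simp [hm]
    · exact (hH _ hm (hrow m)).le
  have hzero := (Finset.sum_eq_zero_iff_of_nonneg fun m _ => hnonneg m).1
    (le_antisymm (hsum ▸ htrace) (Finset.sum_nonneg fun m _ => hnonneg m))
  have hS : S = 0 := funext fun m => by
    by_contra hm
    exact (hH _ hm (hrow m)).ne' (hzero m (Finset.mem_univ m))
  simp [hS]

section Covariance

variable {n : ℕ} {M : PointedCone ℝ (RPoly n)} {u ℓ : RPoly n} {z : Fin n → ℝ}
  {φ : RPoly n →ₗ[ℝ] ℝ} {V : Ideal (RPoly n)}

/-- The second moments of the coordinates centred at `z` and localized by `ℓ`. The factor `ℓ` makes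
the centred coordinates vanish at the other points of interest. -/
noncomputable def covarianceMatrix (φ : RPoly n →ₗ[ℝ] ℝ) (ℓ : RPoly n) (z : Fin n → ℝ) :
    Matrix (Fin n) (Fin n) ℝ :=
  Matrix.of fun k l => φ (ℓ * (X k - C (z k)) * (ℓ * (X l - C (z l))))

theorem IsCharacterState.apply_mul_mul_mul (hφ : IsCharacterState M u (aeval z) φ)
    (hV : ∀ a ∈ V * V, a ∈ boundedBy M u) (hℓ : ∀ s, eval z s = 0 → ℓ * s ∈ V) {s t : RPoly n}
    (hs : eval z s = 0) (ht : eval z t = 0) :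
    φ (ℓ * s * (ℓ * t)) = gradP s z ⬝ᵥ (covarianceMatrix φ ℓ z).mulVec (gradP t z) := by
  obtain ⟨s', hs', hsgrad⟩ := exists_eq_C_add_sum_sub_mul_gradP z s
  obtain ⟨t', ht', htgrad⟩ := exists_eq_C_add_sum_sub_mul_gradP z t
  have hexpand : ℓ * s * (ℓ * t) = ∑ k, ∑ l,
      s' k * t' l * (ℓ * (X k - C (z k)) * (ℓ * (X l - C (z l)))) := by
    rw [hs', ht', hs, ht, map_zero, zero_add, zero_add, Finset.mul_sum, Finset.mul_sum,
      Finset.sum_mul_sum]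
    exact Finset.sum_congr rfl fun k _ => Finset.sum_congr rfl fun l _ => by ring
  have hX : ∀ k, ℓ * (X k - C (z k)) ∈ V := fun k => hℓ _ (by simp)
  simp only [hexpand, map_sum, dotProduct, Matrix.mulVec, covarianceMatrix, Matrix.of_apply,
    Finset.mul_sum]
  refine Finset.sum_congr rfl fun k _ => Finset.sum_congr rfl fun l _ => ?_
  rw [hφ.map_mul _ _ (hV _ (Ideal.mul_mem_mul (hX k) (hX l))), aeval_eq_eval, RingHom.map_mul,
    hsgrad, htgrad]
  ring

theorem IsCharacterState.apply_sq_mul (hφ : IsCharacterState M u (aeval z) φ)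
    (hV : ∀ a ∈ V * V, a ∈ boundedBy M u) (hℓ : ∀ s, eval z s = 0 → ℓ * s ∈ V) {q : RPoly n}
    (hq : eval z q = 0) (hgrad : gradP q z = 0) :
    φ (ℓ ^ 2 * q) =
      1 / 2 * (Matrix.of (hessP q z) * covarianceMatrix φ ℓ z).trace := by
  obtain ⟨r, hr, hhess⟩ := exists_eq_half_sum_sub_mul_sub_mul_hessP z hq hgrad
  have hexpand : ℓ ^ 2 * q = (1 / 2 : ℝ) • ∑ k, ∑ l,
      r k l * (ℓ * (X l - C (z l)) * (ℓ * (X k - C (z k)))) := by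
    rw [hr, mul_smul_comm, Finset.mul_sum]
    simp only [Finset.mul_sum]
    congr! 3
    ring
  have hX : ∀ k, ℓ * (X k - C (z k)) ∈ V := fun k => hℓ _ (by simp)
  simp only [hexpand, map_smul, smul_eq_mul, map_sum, Matrix.trace, Matrix.diag_apply,
    Matrix.mul_apply, covarianceMatrix, Matrix.of_apply]
  congr! 3 with k _ l _
  rw [hφ.map_mul _ _ (hV _ (Ideal.mul_mem_mul (hX l) (hX k))), aeval_eq_eval, hhess]

theorem IsCharacterState.posSemidef_covarianceMatrix (hM : IsQuadraticModule M)
    (hφ : IsCharacterState M u (aeval z) φ) (hV : ∀ a ∈ V * V, a ∈ boundedBy M u)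
    (hℓ : ∀ s, eval z s = 0 → ℓ * s ∈ V) : (covarianceMatrix φ ℓ z).PosSemidef := by
  refine Matrix.PosSemidef.of_dotProduct_mulVec_nonneg ?_ fun y => ?_
  · ext k l
    simp [covarianceMatrix, mul_comm]
  · let s : RPoly n := ∑ k, y k • (X k - C (z k))
    have hs : eval z s = 0 := by simp [s, smul_eval]
    have hgrad : gradP s z = y := by
      classical
      funext k
      simp [s, gradP, pderiv_X, Pi.single_apply, apply_ite]
    have hsq := hφ.apply_mul_mul_mul hV hℓ hs hs
    rw [hgrad, ← sq] at hsq
    rw [star_trivial, ← hsq]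
    exact hφ.nonneg _ (hM.sq_mem _) (hV _ (sq (ℓ * s) ▸ Ideal.mul_mem_mul (hℓ s hs) (hℓ s hs)))

theorem IsCharacterState.covarianceMatrix_mulVec_gradP (hφ : IsCharacterState M u (aeval z) φ)
    (hV : ∀ a ∈ V * V, a ∈ boundedBy M u) (hℓ : ∀ s, eval z s = 0 → ℓ * s ∈ V) {q : RPoly n}
    (hq : eval z q = 0) (hbdd : ℓ ^ 2 * q ∈ boundedBy M u) :
    (covarianceMatrix φ ℓ z).mulVec (gradP q z) = 0 := by
  classical
  funext k
  have hX : eval z (X k - C (z k)) = 0 := by simp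
  have hgrad : gradP (X k - C (z k)) z = Pi.single k 1 := by
    funext l
    simp [gradP, pderiv_X, Pi.single_apply, apply_ite, eq_comm]
  have hmul := hφ.apply_mul_mul_mul hV hℓ hX hq
  rw [hgrad, single_one_dotProduct] at hmul
  rw [← hmul, show ℓ * (X k - C (z k)) * (ℓ * q) = (X k - C (z k)) * (ℓ ^ 2 * q) by ring,
    hφ.map_mul _ _ hbdd, aeval_eq_eval, hX, zero_mul, Pi.zero_apply]

theorem IsCharacterState.apply_eq_zero_of_mem_mul (hφ : IsCharacterState M u (aeval z) φ)
    (hV : ∀ a ∈ V * V, a ∈ boundedBy M u) (hℓ : ∀ s, eval z s = 0 → ℓ * s ∈ V)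
    (hz : ∀ s ∈ V, eval z s = 0) (hℓz : eval z ℓ = 1) (hcov : covarianceMatrix φ ℓ z = 0)
    {a : RPoly n} (ha : a ∈ V * V) : φ a = 0 := by
  refine Submodule.mul_induction_on ha (fun s hs t ht => ?_) fun a b ha hb => by
    rw [map_add, ha, hb, add_zero]
  have hlocal := hφ.map_mul (ℓ ^ 2) (s * t) (hV _ (Ideal.mul_mem_mul hs ht))
  rw [aeval_eq_eval, map_pow, hℓz, one_pow, one_mul] at hlocal
  rw [← hlocal, show ℓ ^ 2 * (s * t) = ℓ * s * (ℓ * t) by ring,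
    hφ.apply_mul_mul_mul hV hℓ (hz s hs) (hz t ht), hcov, Matrix.zero_mulVec, dotProduct_zero]

end Covariance

/-! ### Membership of a polynomial with nondegenerate zeros in the constraint cone -/

section LocalCertificate

variable {n : ℕ} {E I : Finset ℕ} {c : ℕ → RPoly n} {p u ℓ : RPoly n} {z : Fin n → ℝ}
  {lamE lamI : ℕ → ℝ} {φ : RPoly n →ₗ[ℝ] ℝ} {V : Ideal (RPoly n)}

theorem sq_mul_mem_mul_of_gradP_eq_zero (hℓ : ∀ s, eval z s = 0 → ℓ * s ∈ V) {q : RPoly n}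
    (hq : eval z q = 0) (hgrad : gradP q z = 0) : ℓ ^ 2 * q ∈ V * V := by
  obtain ⟨r, rfl, -⟩ := exists_eq_half_sum_sub_mul_sub_mul_hessP z hq hgrad
  have hX : ∀ k, ℓ * (X k - C (z k)) ∈ V := fun k => hℓ _ (by simp)
  rw [mul_smul_comm]
  refine Submodule.smul_of_tower_mem _ _ ?_
  simp only [Finset.mul_sum]
  refine sum_mem fun k _ => sum_mem fun l _ => ?_
  convert Ideal.mul_mem_left _ (r k l) (Ideal.mul_mem_mul (hX k) (hX l)) using 1
  ring

theorem eq_lagrangian_add (p : RPoly n) (lamE lamI : ℕ → ℝ) :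
    p = lagrangian E I c p lamE lamI + ∑ j ∈ E, lamE j • c j + ∑ j ∈ I, lamI j • c j := by
  rw [lagrangian]
  abel

theorem IsStrictKKT.sq_mul_mem (h : IsStrictKKT E I c p z lamE lamI) (hz : z ∈ Kset E I c)
    (hp : eval z p = 0) (hℓ : ∀ s, eval z s = 0 → ℓ * s ∈ V) {S : Submodule ℝ (RPoly n)}
    (hVS : ∀ a ∈ V * V, a ∈ S) (hcS : ∀ j ∈ activeSet E I c z, ℓ ^ 2 * c j ∈ S) :
    ℓ ^ 2 * p ∈ S := by
  rw [eq_lagrangian_add (E := E) (I := I) (c := c) p lamE lamI]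
  simp only [mul_add, Finset.mul_sum, mul_smul_comm]
  refine add_mem (add_mem ?_ (sum_mem fun j hj => ?_)) (sum_mem fun j hj => ?_)
  · exact hVS _ (sq_mul_mem_mul_of_gradP_eq_zero hℓ (h.eval_lagrangian_eq_zero hz hp)
      h.gradP_eq_zero)
  · exact S.smul_mem _ (hcS j (.inl hj))
  · rcases mul_eq_zero.1 (h.mul_eval_eq_zero j hj) with hlam | hactive
    · rw [hlam, zero_smul]
      exact S.zero_mem
    · exact S.smul_mem _ (hcS j (.inr ⟨hj, hactive⟩))

theorem neg_mul_mem_constraintCone {j : ℕ} (hj : j ∈ E) (q : RPoly n) :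
    -(q * c j) ∈ constraintCone E I c :=
  neg_mul q (c j) ▸ mul_mem_constraintCone hj (-q)

theorem IsCharacterState.apply_mul_eq_zero
    (hφ : IsCharacterState (constraintCone E I c) u (aeval z) φ) {j : ℕ} (hj : j ∈ E)
    (q : RPoly n) : φ (q * c j) = 0 :=
  hφ.apply_eq_zero_of_neg_mem (mul_mem_constraintCone hj q) (neg_mul_mem_constraintCone hj q)

theorem IsCharacterState.apply_sq_mul_eq_trace_add
    (hφ : IsCharacterState (constraintCone E I c) u (aeval z) φ)
    (hV : ∀ a ∈ V * V, a ∈ boundedBy (constraintCone E I c) u)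
    (hℓ : ∀ s, eval z s = 0 → ℓ * s ∈ V) (h : IsStrictKKT E I c p z lamE lamI)
    (hz : z ∈ Kset E I c) (hp : eval z p = 0) :
    φ (ℓ ^ 2 * p) = 1 / 2 * (Matrix.of (hessP (lagrangian E I c p lamE lamI) z) *
      covarianceMatrix φ ℓ z).trace + ∑ j ∈ I, lamI j * φ (ℓ ^ 2 * c j) := by
  rw [← hφ.apply_sq_mul hV hℓ (h.eval_lagrangian_eq_zero hz hp) h.gradP_eq_zero]
  conv_lhs => rw [eq_lagrangian_add (E := E) (I := I) (c := c) p lamE lamI]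
  simp only [mul_add, Finset.mul_sum, mul_smul_comm, map_add, map_sum, map_smul, smul_eq_mul]
  rw [Finset.sum_eq_zero fun j hj => by rw [hφ.apply_mul_eq_zero hj, mul_zero], add_zero]

theorem IsStrictKKT.mul_apply_sq_mul_nonneg (h : IsStrictKKT E I c p z lamE lamI)
    (hφ : IsCharacterState (constraintCone E I c) u (aeval z) φ)
    (hbdd : ∀ j ∈ I, eval z (c j) = 0 → ℓ ^ 2 * c j ∈ boundedBy (constraintCone E I c) u)
    {j : ℕ} (hj : j ∈ I) : 0 ≤ lamI j * φ (ℓ ^ 2 * c j) := by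
  rcases mul_eq_zero.1 (h.mul_eval_eq_zero j hj) with hlam | hactive
  · rw [hlam, zero_mul]
  · have hmem := (isQuadraticModule_constraintCone E I c).sq_mul_mem ℓ _
      (mem_constraintCone_of_mem hj)
    exact mul_nonneg (h.nonneg j hj) (hφ.nonneg _ hmem (hbdd j hj hactive))

theorem IsStrictKKT.covarianceMatrix_eq_zero (h : IsStrictKKT E I c p z lamE lamI)
    (hz : z ∈ Kset E I c) (hp : eval z p = 0)
    (hφ : IsCharacterState (constraintCone E I c) u (aeval z) φ)
    (hV : ∀ a ∈ V * V, a ∈ boundedBy (constraintCone E I c) u)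
    (hℓ : ∀ s, eval z s = 0 → ℓ * s ∈ V)
    (hbdd : ∀ j ∈ I, eval z (c j) = 0 → ℓ ^ 2 * c j ∈ boundedBy (constraintCone E I c) u)
    (hφp : φ (ℓ ^ 2 * p) ≤ 0) : covarianceMatrix φ ℓ z = 0 := by
  have hM := isQuadraticModule_constraintCone E I c
  refine eq_zero_of_trace_mul_nonpos (G := (fun j => gradP (c j) z) '' activeSet E I c z)
    (hφ.posSemidef_covarianceMatrix hM hV hℓ) ?_
    (fun v hv hvG => h.hess_pos v hv fun j hj => hvG _ ⟨j, hj, rfl⟩) ?_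
  · rintro _ ⟨j, hj | ⟨hj, hactive⟩, rfl⟩
    · exact hφ.covarianceMatrix_mulVec_gradP hV hℓ (hz.1 j hj)
        (mem_boundedBy_of_neg_mem (mul_mem_constraintCone hj _) (neg_mul_mem_constraintCone hj _))
    · exact hφ.covarianceMatrix_mulVec_gradP hV hℓ hactive (hbdd j hj hactive)
  · have hsum := Finset.sum_nonneg fun j hj => h.mul_apply_sq_mul_nonneg hφ hbdd (j := j) hj
    linarith [hφ.apply_sq_mul_eq_trace_add hV hℓ h hz hp]

theorem IsStrictKKT.apply_sq_mul_eq_zero (h : IsStrictKKT E I c p z lamE lamI)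
    (hz : z ∈ Kset E I c) (hp : eval z p = 0)
    (hφ : IsCharacterState (constraintCone E I c) u (aeval z) φ)
    (hV : ∀ a ∈ V * V, a ∈ boundedBy (constraintCone E I c) u)
    (hℓ : ∀ s, eval z s = 0 → ℓ * s ∈ V)
    (hbdd : ∀ j ∈ I, eval z (c j) = 0 → ℓ ^ 2 * c j ∈ boundedBy (constraintCone E I c) u)
    (hφp : φ (ℓ ^ 2 * p) ≤ 0) {j : ℕ} (hj : j ∈ I) (hactive : eval z (c j) = 0) :
    φ (ℓ ^ 2 * c j) = 0 := by
  have hnonneg := fun j hj => h.mul_apply_sq_mul_nonneg hφ hbdd (j := j) hj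
  have htrace := hφ.apply_sq_mul_eq_trace_add hV hℓ h hz hp
  rw [h.covarianceMatrix_eq_zero hz hp hφ hV hℓ hbdd hφp, mul_zero, Matrix.trace_zero, mul_zero,
    zero_add] at htrace
  have hzero := (Finset.sum_eq_zero_iff_of_nonneg hnonneg).1
    (le_antisymm (htrace ▸ hφp) (Finset.sum_nonneg hnonneg)) j hj
  exact (mul_eq_zero.1 hzero).resolve_left (h.pos_of_active j hj hactive).ne'

end LocalCertificate

section GlobalCertificate

variable {n : ℕ} {E I : Finset ℕ} {c : ℕ → RPoly n} {p u : RPoly n} {Z : Finset (Fin n → ℝ)}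
  {G : Finset (RPoly n)} {φ : RPoly n →ₗ[ℝ] ℝ} {z : Fin n → ℝ}

/-- The pairs of a point of `Z` and an inequality constraint active at that point. -/
noncomputable def activePairs (Z : Finset (Fin n → ℝ)) (I : Finset ℕ) (c : ℕ → RPoly n) :
    Finset ((Fin n → ℝ) × ℕ) :=
  {t ∈ Z ×ˢ I | eval t.1 (c t.2) = 0}

/-- The constraint `c t.2`, multiplied by a square so that it is only seen near `t.1`. -/
noncomputable def localizedConstraint (Z : Finset (Fin n → ℝ)) (c : ℕ → RPoly n)
    (t : (Fin n → ℝ) × ℕ) : RPoly n :=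
  lagrangeBasis Z t.1 ^ 2 * c t.2

/-- The order unit used to certify a polynomial whose zero set on `K` is `Z`: the squares of the
elements of `G`, which generates the vanishing ideal of `Z`, plus the active constraints localized
at the points of `Z`. -/
noncomputable def zerosUnit (G : Finset (RPoly n)) (Z : Finset (Fin n → ℝ)) (I : Finset ℕ)
    (c : ℕ → RPoly n) : RPoly n :=
  squaresUnit G (activePairs Z I c) (localizedConstraint Z c)

theorem mem_activePairs {t : (Fin n → ℝ) × ℕ} :
    t ∈ activePairs Z I c ↔ (t.1 ∈ Z ∧ t.2 ∈ I) ∧ eval t.1 (c t.2) = 0 := by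
  rw [activePairs, Finset.mem_filter, Finset.mem_product]

theorem localizedConstraint_mem {t : (Fin n → ℝ) × ℕ} (ht : t ∈ activePairs Z I c) :
    localizedConstraint Z c t ∈ constraintCone E I c :=
  (isQuadraticModule_constraintCone E I c).sq_mul_mem _ _
    (mem_constraintCone_of_mem (mem_activePairs.1 ht).1.2)

theorem mul_localizedConstraint_sub_smul_mem {t : (Fin n → ℝ) × ℕ} (ht : t ∈ activePairs Z I c)
    (a : RPoly n) : a * localizedConstraint Z c t - eval t.1 a • localizedConstraint Z c t ∈
      vanishingIdeal ℝ (Z : Set (Fin n → ℝ)) * vanishingIdeal ℝ (Z : Set (Fin n → ℝ)) := by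
  convert Ideal.mul_mem_mul
    (lagrangeBasis_mul_mem_vanishingIdeal (Z := Z) (z := t.1) (s := a - C (eval t.1 a)) (by simp))
    (lagrangeBasis_mul_mem_vanishingIdeal (Z := Z) (mem_activePairs.1 ht).2) using 1
  rw [localizedConstraint, smul_eq_C_mul]
  ring

theorem mem_boundedBy_zerosUnit_of_mem_mul (harch : ArchimedeanQM E I c)
    (hG : Ideal.span (G : Set (RPoly n)) = vanishingIdeal ℝ (Z : Set (Fin n → ℝ))) {a : RPoly n}
    (ha : a ∈ vanishingIdeal ℝ (Z : Set (Fin n → ℝ)) * vanishingIdeal ℝ (Z : Set (Fin n → ℝ))) :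
    a ∈ boundedBy (constraintCone E I c) (zerosUnit G Z I c) :=
  (isQuadraticModule_constraintCone E I c).mem_boundedBy_squaresUnit_of_mem_mul
    harch.boundedBy_one_eq_top (fun _ => localizedConstraint_mem) (hG ▸ ha)

theorem localizedConstraint_mem_boundedBy_zerosUnit {t : (Fin n → ℝ) × ℕ}
    (ht : t ∈ activePairs Z I c) :
    localizedConstraint Z c t ∈ boundedBy (constraintCone E I c) (zerosUnit G Z I c) :=
  (isQuadraticModule_constraintCone E I c).mem_boundedBy_squaresUnit
    (fun _ => localizedConstraint_mem) ht

theorem sq_mul_zerosUnit_mem_boundedBy (harch : ArchimedeanQM E I c)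
    (hG : Ideal.span (G : Set (RPoly n)) = vanishingIdeal ℝ (Z : Set (Fin n → ℝ))) (a : RPoly n) :
    a ^ 2 * zerosUnit G Z I c ∈ boundedBy (constraintCone E I c) (zerosUnit G Z I c) :=
  (isQuadraticModule_constraintCone E I c).sq_mul_squaresUnit_mem_boundedBy
    harch.boundedBy_one_eq_top (fun _ => localizedConstraint_mem)
    (fun t ht a => ⟨eval t.1 a, hG ▸ mul_localizedConstraint_sub_smul_mem ht a⟩) a

theorem sq_lagrangeBasis_mul_mem_boundedBy_zerosUnit (hz : z ∈ Z) {j : ℕ}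
    (hj : j ∈ activeSet E I c z) :
    lagrangeBasis Z z ^ 2 * c j ∈ boundedBy (constraintCone E I c) (zerosUnit G Z I c) := by
  rcases hj with hj | ⟨hj, hactive⟩
  · exact mem_boundedBy_of_neg_mem (mul_mem_constraintCone hj _) (neg_mul_mem_constraintCone hj _)
  · exact localizedConstraint_mem_boundedBy_zerosUnit (t := (z, j))
      (mem_activePairs.2 ⟨⟨hz, hj⟩, hactive⟩)

theorem mem_boundedBy_zerosUnit (harch : ArchimedeanQM E I c)
    (hG : Ideal.span (G : Set (RPoly n)) = vanishingIdeal ℝ (Z : Set (Fin n → ℝ)))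
    (hZ : ∀ z ∈ Z, z ∈ Kset E I c ∧ eval z p = 0)
    (hKKT : ∀ z ∈ Z, ∃ lamE lamI, IsStrictKKT E I c p z lamE lamI) :
    p ∈ boundedBy (constraintCone E I c) (zerosUnit G Z I c) := by
  have hV := fun a => mem_boundedBy_zerosUnit_of_mem_mul (a := a) harch hG
  have hpV : p ∈ vanishingIdeal ℝ (Z : Set (Fin n → ℝ)) :=
    mem_vanishingIdeal_iff.2 fun z hz => by rw [aeval_eq_eval]; exact (hZ z hz).2
  have hsplit : p = p * (1 - ∑ z ∈ Z, lagrangeBasis Z z ^ 2) +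
      ∑ z ∈ Z, lagrangeBasis Z z ^ 2 * p := by
    rw [← Finset.sum_mul]
    ring
  rw [hsplit]
  refine add_mem (hV _ (Ideal.mul_mem_mul hpV (one_sub_sum_sq_lagrangeBasis_mem Z)))
    (sum_mem fun z hz => ?_)
  obtain ⟨lamE, lamI, h⟩ := hKKT z hz
  exact h.sq_mul_mem (hZ z hz).1 (hZ z hz).2 (fun _ => lagrangeBasis_mul_mem_vanishingIdeal) hV
    fun _ => sq_lagrangeBasis_mul_mem_boundedBy_zerosUnit hz

theorem IsCharacterState.apply_localizedConstraint_eq_zero_of_ne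
    (hφ : IsCharacterState (constraintCone E I c) (zerosUnit G Z I c) (aeval z) φ)
    (hmul : ∀ a ∈ vanishingIdeal ℝ (Z : Set (Fin n → ℝ)) *
      vanishingIdeal ℝ (Z : Set (Fin n → ℝ)), φ a = 0)
    (hz : z ∈ Z) {t : (Fin n → ℝ) × ℕ} (ht : t ∈ activePairs Z I c) (htz : t.1 ≠ z) :
    φ (localizedConstraint Z c t) = 0 := by
  have hprod : lagrangeBasis Z z * lagrangeBasis Z t.1 ∈
      vanishingIdeal ℝ (Z : Set (Fin n → ℝ)) :=
    lagrangeBasis_mul_mem_vanishingIdeal (eval_lagrangeBasis_of_ne hz htz.symm)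
  have hlocal := hφ.map_mul (lagrangeBasis Z z ^ 2) _
    (localizedConstraint_mem_boundedBy_zerosUnit ht)
  rw [aeval_eq_eval, map_pow, eval_lagrangeBasis_self, one_pow, one_mul] at hlocal
  rw [← hlocal, localizedConstraint]
  convert hmul _ (Ideal.mul_mem_mul hprod (Ideal.mul_mem_right (c t.2) _ hprod)) using 2
  ring

theorem IsCharacterState.apply_zerosUnit_eq_zero
    (hG : Ideal.span (G : Set (RPoly n)) = vanishingIdeal ℝ (Z : Set (Fin n → ℝ)))
    (hφ : IsCharacterState (constraintCone E I c) (zerosUnit G Z I c) (aeval z) φ)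
    (hmul : ∀ a ∈ vanishingIdeal ℝ (Z : Set (Fin n → ℝ)) *
      vanishingIdeal ℝ (Z : Set (Fin n → ℝ)), φ a = 0)
    (hz : z ∈ Z) (hconstraint : ∀ j ∈ I, eval z (c j) = 0 → φ (lagrangeBasis Z z ^ 2 * c j) = 0) :
    φ (zerosUnit G Z I c) = 0 := by
  have hgen : ∀ g ∈ G, φ (g ^ 2) = 0 := fun g hg => by
    have hgV : g ∈ vanishingIdeal ℝ (Z : Set (Fin n → ℝ)) := hG ▸ Ideal.subset_span hg
    exact hmul _ (sq g ▸ Ideal.mul_mem_mul hgV hgV)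
  have hlocalized : ∀ t ∈ activePairs Z I c, φ (localizedConstraint Z c t) = 0 := by
    rintro ⟨w, j⟩ ht
    by_cases hwz : w = z
    · subst hwz
      obtain ⟨⟨-, hj⟩, hactive⟩ := mem_activePairs.1 ht
      exact hconstraint j hj hactive
    · exact hφ.apply_localizedConstraint_eq_zero_of_ne hmul hz ht hwz
  rw [zerosUnit, squaresUnit, map_add, map_sum, map_sum, Finset.sum_eq_zero hgen,
    Finset.sum_eq_zero hlocalized, add_zero]

theorem IsCharacterState.notMem_zeros (harch : ArchimedeanQM E I c)
    (hG : Ideal.span (G : Set (RPoly n)) = vanishingIdeal ℝ (Z : Set (Fin n → ℝ)))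
    (hZ : ∀ z ∈ Z, z ∈ Kset E I c ∧ eval z p = 0)
    (hKKT : ∀ z ∈ Z, ∃ lamE lamI, IsStrictKKT E I c p z lamE lamI)
    (hφ : IsCharacterState (constraintCone E I c) (zerosUnit G Z I c) (aeval z) φ)
    (hφp : φ p ≤ 0) : z ∉ Z := by
  intro hz
  obtain ⟨lamE, lamI, h⟩ := hKKT z hz
  have hV := fun a => mem_boundedBy_zerosUnit_of_mem_mul (a := a) harch hG
  have hℓ : ∀ s, eval z s = 0 → lagrangeBasis Z z * s ∈ vanishingIdeal ℝ (Z : Set (Fin n → ℝ)) :=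
    fun _ => lagrangeBasis_mul_mem_vanishingIdeal
  have hbdd : ∀ j ∈ I, eval z (c j) = 0 → lagrangeBasis Z z ^ 2 * c j ∈
      boundedBy (constraintCone E I c) (zerosUnit G Z I c) := fun j hj hactive =>
    sq_lagrangeBasis_mul_mem_boundedBy_zerosUnit hz (.inr ⟨hj, hactive⟩)
  have hlocal : φ (lagrangeBasis Z z ^ 2 * p) ≤ 0 := by
    rwa [hφ.map_mul _ _ (mem_boundedBy_zerosUnit harch hG hZ hKKT), aeval_eq_eval, map_pow,
      eval_lagrangeBasis_self, one_pow, one_mul]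
  have hcov := h.covarianceMatrix_eq_zero (hZ z hz).1 (hZ z hz).2 hφ hV hℓ hbdd hlocal
  have hmul := fun a => hφ.apply_eq_zero_of_mem_mul (a := a) hV hℓ
    (fun s hs => by simpa only [aeval_eq_eval] using mem_vanishingIdeal_iff.1 hs z hz)
    (eval_lagrangeBasis_self Z z) hcov
  have hunit := hφ.apply_zerosUnit_eq_zero hG hmul hz fun j =>
    h.apply_sq_mul_eq_zero (hZ z hz).1 (hZ z hz).2 hφ hV hℓ hbdd hlocal
  exact zero_ne_one (hunit.symm.trans hφ.map_unit)

theorem mem_Kset_of_forall_eval_nonneg {x : Fin n → ℝ}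
    (h : ∀ a ∈ constraintCone E I c, 0 ≤ eval x a) : x ∈ Kset E I c := by
  refine ⟨fun j hj => le_antisymm ?_ ?_, fun j hj => h _ (mem_constraintCone_of_mem hj)⟩
  · simpa using h _ (mul_mem_constraintCone hj (-1))
  · simpa using h _ (mul_mem_constraintCone hj 1)

theorem IsCharacterState.mem_Kset_and_eval_nonpos {s : RPoly n}
    (hu : ∀ a, a ^ 2 * u ∈ boundedBy (constraintCone E I c) u)
    (hφ : IsCharacterState (constraintCone E I c) u (aeval z) φ)
    (hp : p ∈ boundedBy (constraintCone E I c) u) (hφp : φ p ≤ 0)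
    (hs : s ^ 2 ∈ boundedBy (constraintCone E I c) u) (hsz : eval z s ≠ 0) :
    z ∈ Kset E I c ∧ eval z p ≤ 0 := by
  have hM := isQuadraticModule_constraintCone E I c
  have hχ : aeval z s ≠ 0 := by rwa [aeval_eq_eval]
  refine ⟨mem_Kset_of_forall_eval_nonneg fun a ha => ?_, ?_⟩
  · simpa only [aeval_eq_eval] using hφ.character_nonneg hM hu hs hχ ha
  · have hcomm := hφ.mul_apply_comm hs hp
    have hpos := hφ.apply_sq_pos hM hu hs hχ
    rw [aeval_eq_eval, map_pow] at hcomm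
    exact nonpos_of_mul_nonpos_left (hcomm ▸ mul_nonpos_of_nonneg_of_nonpos (sq_nonneg _) hφp) hpos

theorem mem_constraintCone_of_isStrictKKT (harch : ArchimedeanQM E I c)
    (hp : ∀ x ∈ Kset E I c, 0 ≤ eval x p)
    (hKKT : ∀ x ∈ Kset E I c, eval x p = 0 → ∃ lamE lamI, IsStrictKKT E I c p x lamE lamI) :
    p ∈ constraintCone E I c := by
  have hM := isQuadraticModule_constraintCone E I c
  obtain ⟨Z, hZ⟩ := (finite_zeros_of_isStrictKKT harch.isCompact_Kset hKKT).exists_finset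
  simp only [Set.mem_ofPred_eq] at hZ
  obtain ⟨G, hG⟩ := IsNoetherian.noetherian (vanishingIdeal ℝ (Z : Set (Fin n → ℝ)))
  have hKKT' : ∀ z ∈ Z, ∃ lamE lamI, IsStrictKKT E I c p z lamE lamI := fun z hz =>
    hKKT z ((hZ z).1 hz).1 ((hZ z).1 hz).2
  have hu := sq_mul_zerosUnit_mem_boundedBy harch hG
  have hpu := mem_boundedBy_zerosUnit harch hG (fun z => (hZ z).1) hKKT'
  by_contra hpM
  obtain ⟨χ, φ, hφ, hφp⟩ := hM.exists_isCharacterState hu hpu hpM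
  rw [aeval_unique χ] at hφ
  have hxZ := hφ.notMem_zeros harch hG (fun z => (hZ z).1) hKKT' hφp
  obtain ⟨s, hs, hsx⟩ := exists_mem_vanishingIdeal_eval_ne_zero hxZ
  have hsu := mem_boundedBy_zerosUnit_of_mem_mul harch hG (Ideal.mul_mem_mul hs hs)
  obtain ⟨hxK, hxp⟩ := hφ.mem_Kset_and_eval_nonpos hu hpu hφp (sq s ▸ hsu) hsx
  exact hxZ ((hZ _).2 ⟨hxK, le_antisymm hxp (hp _ hxK)⟩)

end GlobalCertificate

/-! ### Semi-infinite linear programming duality -/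

section ConvexHull

variable {V : Type*} [NormedAddCommGroup V] [NormedSpace ℝ V] [FiniteDimensional ℝ V] {S : Set V}

theorem exists_stdSimplex_sum_eq_of_mem_convexHull {x : V} (hx : x ∈ convexHull ℝ S) :
    ∃ w ∈ stdSimplex ℝ (Fin (Module.finrank ℝ V + 1)),
      ∃ z : Fin (Module.finrank ℝ V + 1) → V, (∀ j, z j ∈ S) ∧ ∑ j, w j • z j = x := by
  obtain ⟨s₀, hs₀⟩ := convexHull_nonempty_iff.1 ⟨x, hx⟩
  obtain ⟨ι, _, z, w, hzS, hz, hw, hw1, rfl⟩ := eq_pos_convex_span_of_mem_convexHull hx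
  have hcard : Fintype.card ι ≤ Fintype.card (Fin (Module.finrank ℝ V + 1)) := by
    rw [Fintype.card_fin]
    exact hz.card_le_finrank_succ.trans (Nat.succ_le_succ (Submodule.finrank_le _))
  obtain ⟨e⟩ := Function.Embedding.nonempty_of_card_le hcard
  have hout : ∀ j ∉ Set.range e, Function.extend e w 0 j = 0 := fun j hj =>
    Function.extend_apply' _ _ _ hj
  have hmem : ∀ j, 0 ≤ Function.extend e w 0 j ∧ Function.extend e z (fun _ => s₀) j ∈ S := by
    intro j
    by_cases hj : j ∈ Set.range e
    · obtain ⟨i, rfl⟩ := hj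
      simp only [e.injective.extend_apply]
      exact ⟨(hw i).le, hzS ⟨i, rfl⟩⟩
    · rw [hout j hj, Function.extend_apply' _ _ _ hj]
      exact ⟨le_rfl, hs₀⟩
  refine ⟨Function.extend e w 0, ⟨fun j => (hmem j).1, ?_⟩, _, fun j => (hmem j).2, ?_⟩
  · rw [← hw1]
    exact (Fintype.sum_of_injective e e.injective _ _ hout fun i => by
      rw [e.injective.extend_apply]).symm
  · exact (Fintype.sum_of_injective e e.injective _ _ (fun j hj => by rw [hout j hj, zero_smul])
      fun i => by simp only [e.injective.extend_apply]).symm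

theorem isCompact_convexHull (hS : IsCompact S) : IsCompact (convexHull ℝ S) := by
  let N := Module.finrank ℝ V + 1
  have himage : convexHull ℝ S = (fun p : (Fin N → ℝ) × (Fin N → V) => ∑ j, p.1 j • p.2 j) ''
      (stdSimplex ℝ (Fin N) ×ˢ Set.univ.pi fun _ => S) := by
    refine Set.Subset.antisymm (fun x hx => ?_) ?_
    · obtain ⟨w, hw, z, hz, hwz⟩ := exists_stdSimplex_sum_eq_of_mem_convexHull hx
      exact ⟨(w, z), ⟨hw, fun j _ => hz j⟩, hwz⟩
    · rintro _ ⟨⟨w, z⟩, ⟨hw, hz⟩, rfl⟩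
      exact mem_convexHull_of_exists_fintype w z hw.1 hw.2 (fun i => hz i (Set.mem_univ i)) rfl
  rw [himage]
  exact ((isCompact_stdSimplex ℝ (Fin N)).prod (isCompact_univ_pi fun _ => hS)).image (by fun_prop)

end ConvexHull

section Farkas

variable {V : Type*} [NormedAddCommGroup V] [NormedSpace ℝ V] {S : Set V} {C : ProperCone ℝ V}

open scoped Pointwise in
theorem exists_separating_of_notMem_add {T : Set V} (hT : IsCompact T) (hTconv : Convex ℝ T)
    {w : V} (hw : w ∉ T + (C : Set V)) :
    ∃ L : V →L[ℝ] ℝ, (∀ y ∈ C, 0 ≤ L y) ∧ ∀ t ∈ T, L w < L t := by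
  have hdisj : Disjoint ({w} + -T) (C : Set V) := by
    rw [Set.disjoint_left]
    rintro _ ⟨_, rfl, t, ht, rfl⟩ hC
    exact hw ⟨-t, ht, _, hC, by simp⟩
  obtain ⟨L, hLC, hL⟩ := C.hyperplane_separation ((convex_singleton w).add hTconv.neg)
    (isCompact_singleton.add hT.neg) hdisj
  refine ⟨L, hLC, fun t ht => ?_⟩
  have := hL (w + -t) ⟨w, rfl, -t, Set.neg_mem_neg.2 ht, rfl⟩
  rwa [← sub_eq_add_neg, map_sub, sub_neg] at this

theorem convexHull_insert_zero_smul_subset_hull {R : ℝ} (hR : 0 ≤ R) :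
    convexHull ℝ (insert 0 ((R • ·) '' S)) ⊆ (PointedCone.hull ℝ S : Set V) := by
  refine convexHull_min ?_ (PointedCone.hull ℝ S).convex
  rintro _ (rfl | ⟨y, hy, rfl⟩)
  · exact zero_mem _
  · exact (PointedCone.hull ℝ S).smul_mem hR (Submodule.subset_span hy)

open scoped Pointwise in
/-- Since `ℓ w` bounds the part of `hull S` needed to reach `w`, that part may be taken compact and
its sum with `C` separated from `w`; adding a multiple of `ℓ` makes the separating functional
nonnegative on `S`. -/
theorem mem_hull_sup_of_forall_nonneg [FiniteDimensional ℝ V] (hS : IsCompact S)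
    {ℓ : V →L[ℝ] ℝ} {ε : ℝ} (hε : 0 < ε) (hℓS : ∀ y ∈ S, ε ≤ ℓ y) (hℓC : ∀ y ∈ C, 0 ≤ ℓ y)
    {e : V} (heC : e ∈ C) (he : 0 < ℓ e) {w : V}
    (hw : ∀ L : V →L[ℝ] ℝ, (∀ y ∈ S, 0 ≤ L y) → (∀ y ∈ C, 0 ≤ L y) → 0 < L e → 0 ≤ L w) :
    w ∈ PointedCone.hull ℝ S ⊔ (C : PointedCone ℝ V) := by
  obtain ⟨R, hR, hℓw⟩ : ∃ R > 0, ℓ w < R * ε :=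
    ⟨(|ℓ w| + 1) / ε, by positivity, by
      rw [div_mul_cancel₀ _ hε.ne']; exact (le_abs_self _).trans_lt (lt_add_one _)⟩
  let T := convexHull ℝ (insert 0 ((R • ·) '' S))
  by_contra hmem
  have hwT : w ∉ T + (C : Set V) := by
    rintro ⟨t, ht, y, hy, rfl⟩
    exact hmem (Submodule.add_mem_sup (convexHull_insert_zero_smul_subset_hull hR.le ht) hy)
  obtain ⟨L, hLC, hLT⟩ := exists_separating_of_notMem_add
    (isCompact_convexHull ((hS.image (continuous_const_smul R)).insert 0)) (convex_convexHull ℝ _)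
    hwT
  have hLw : L w < 0 := by
    simpa only [map_zero] using hLT 0 (subset_convexHull ℝ _ (Set.mem_insert _ _))
  have hLS : ∀ y ∈ S, L w < R * L y := fun y hy => by
    simpa only [map_smul, smul_eq_mul] using
      hLT (R • y) (subset_convexHull ℝ _ (Set.mem_insert_of_mem _ ⟨y, hy, rfl⟩))
  have hc : 0 < -L w / (R * ε) := div_pos (neg_pos.2 hLw) (by positivity)
  have hcR : R * (-L w / (R * ε) * ε) = -L w := by field_simp
  have hnonneg := hw (L + (-L w / (R * ε)) • ℓ) (fun y hy => ?_) (fun y hy => ?_) ?_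
  · have := mul_lt_mul_of_pos_left hℓw hc
    simp only [add_apply, smul_apply, smul_eq_mul]
      at hnonneg
    linarith
  · refine nonneg_of_mul_nonneg_right (a := R) ?_ hR
    have := mul_le_mul_of_nonneg_left (mul_le_mul_of_nonneg_left (hℓS y hy) hc.le) hR.le
    simp only [add_apply, smul_apply, smul_eq_mul, mul_add]
    linarith [hLS y hy]
  · exact add_nonneg (hLC y hy) (mul_nonneg hc.le (hℓC y hy))
  · exact add_pos_of_nonneg_of_pos (hLC e heC) (mul_pos hc he)

end Farkas

section Measure

theorem ae_mem_of_measure_compl_eq_zero {X : Type*} [MeasurableSpace X] {K : Set X}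
    {μ : Measure X} (hμ : μ Kᶜ = 0) :
    ∀ᵐ x ∂μ, x ∈ K := by
  rwa [ae_iff]

variable {X W : Type*} [TopologicalSpace X] [T2Space X] [MeasurableSpace X] [BorelSpace X]
  [NormedAddCommGroup W] {K : Set X} {F : X → W}

theorem integrable_of_continuous_of_measure_compl_eq_zero (hF : Continuous F) (hK : IsCompact K)
    {μ : Measure X} [IsFiniteMeasure μ] (hμ : μ Kᶜ = 0) : Integrable F μ := by
  have hint : IntegrableOn F K μ := hF.continuousOn.integrableOn_compact hK
  rwa [IntegrableOn, Measure.restrict_eq_self_of_ae_mem (ae_mem_of_measure_compl_eq_zero hμ)]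
    at hint

theorem exists_measure_integral_eq_of_mem_hull [NormedSpace ℝ W] [CompleteSpace W]
    (hF : Continuous F) (hK : IsCompact K) {w : W} (hw : w ∈ PointedCone.hull ℝ (F '' K)) :
    ∃ μ : Measure X, IsFiniteMeasure μ ∧ μ Kᶜ = 0 ∧ ∫ x, F x ∂μ = w := by
  induction hw using Submodule.span_induction with
  | mem w hw =>
    obtain ⟨x, hx, rfl⟩ := hw
    refine ⟨Measure.dirac x, inferInstance, ?_, ?_⟩
    · simp [hK.isClosed.isOpen_compl.measurableSet, hx]
    · exact integral_dirac F x
  | zero => exact ⟨0, inferInstance, rfl, integral_zero_measure F⟩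
  | add w₁ w₂ _ _ h₁ h₂ =>
    obtain ⟨μ₁, _, hμ₁, rfl⟩ := h₁
    obtain ⟨μ₂, _, hμ₂, rfl⟩ := h₂
    exact ⟨μ₁ + μ₂, inferInstance, by simp [hμ₁, hμ₂], integral_add_measure
      (integrable_of_continuous_of_measure_compl_eq_zero hF hK hμ₁)
      (integrable_of_continuous_of_measure_compl_eq_zero hF hK hμ₂)⟩
  | smul r w _ h =>
    obtain ⟨μ, _, hμ, rfl⟩ := h
    let r' : NNReal := r
    exact ⟨r' • μ, inferInstance, by simp [hμ], integral_smul_nnreal_measure F r'⟩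

end Measure

section SemiInfinite

variable {ι : Type*}

/-- The cone of slack vectors of the moment problem `∫ aᵢ dμ = bᵢ` (`i ∈ s`), `bᵢ ≤ ∫ aᵢ dμ`
(`i ∉ s`), `∫ f dμ ≤ v`: the differences between `(b, v)` and the integrals of `(a, f)`. -/
def slackCone (s : Set ι) : ProperCone ℝ ((ι → ℝ) × ℝ) where
  carrier := {p | (∀ i ∈ s, p.1 i = 0) ∧ (∀ i ∉ s, p.1 i ≤ 0) ∧ 0 ≤ p.2}
  zero_mem' := ⟨fun _ _ => rfl, fun _ _ => le_rfl, le_rfl⟩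
  add_mem' {p q} hp hq :=
    ⟨fun i hi => by simp [hp.1 i hi, hq.1 i hi],
      fun i hi => add_nonpos (hp.2.1 i hi) (hq.2.1 i hi), add_nonneg hp.2.2 hq.2.2⟩
  smul_mem' r p hp :=
    ⟨fun i hi => by simp [hp.1 i hi],
      fun i hi => smul_nonpos_of_nonneg_of_nonpos r.2 (hp.2.1 i hi), smul_nonneg r.2 hp.2.2⟩
  isClosed' := by
    have hcoord : ∀ i, Continuous fun p : (ι → ℝ) × ℝ => p.1 i := fun i => by fun_prop
    simp only [Set.ofPred_and, Set.ofPred_forall]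
    exact (isClosed_biInter fun i _ => isClosed_eq (hcoord i) continuous_const).inter
      ((isClosed_biInter fun i _ => isClosed_le (hcoord i) continuous_const).inter
        (isClosed_le continuous_const continuous_snd))

theorem mem_slackCone {s : Set ι} {p : (ι → ℝ) × ℝ} :
    p ∈ slackCone s ↔ (∀ i ∈ s, p.1 i = 0) ∧ (∀ i ∉ s, p.1 i ≤ 0) ∧ 0 ≤ p.2 :=
  Iff.rfl

theorem zero_one_mem_slackCone (s : Set ι) : (0, 1) ∈ slackCone s :=
  ⟨fun _ _ => rfl, fun _ _ => le_rfl, zero_le_one⟩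

variable [Fintype ι]

theorem exists_apply_eq_mul_sub_sum (L : (ι → ℝ) × ℝ →L[ℝ] ℝ) (hL : L (0, 1) ≠ 0) :
    ∃ θ : ι → ℝ, ∀ p, L p = L (0, 1) * (p.2 - ∑ i, θ i * p.1 i) := by
  classical
  refine ⟨fun i => -L (Pi.single i 1, 0) / L (0, 1), fun p => ?_⟩
  have hp : p = p.2 • (0, 1) + ∑ i, p.1 i • (Pi.single i 1, 0) := by
    refine Prod.ext ?_ ?_
    · ext j
      simp [Prod.fst_sum, Finset.sum_apply, Pi.single_apply]
    · simp [Prod.snd_sum]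
  conv_lhs => rw [hp]
  simp only [map_add, map_sum, map_smul, smul_eq_mul, mul_sub, Finset.mul_sum]
  rw [mul_comm, sub_eq_add_neg, ← Finset.sum_neg_distrib]
  congr 1
  exact Finset.sum_congr rfl fun i _ => by field_simp

theorem multiplier_nonneg_of_slackCone {s : Set ι} {L : (ι → ℝ) × ℝ →L[ℝ] ℝ}
    (hLC : ∀ p ∈ slackCone s, 0 ≤ L p) (hL : 0 < L (0, 1)) {θ : ι → ℝ}
    (hθ : ∀ p, L p = L (0, 1) * (p.2 - ∑ i, θ i * p.1 i)) {i : ι} (hi : i ∉ s) : 0 ≤ θ i := by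
  classical
  have hsingle : (0 : ι → ℝ) ≤ Pi.single i 1 := Pi.single_nonneg.2 zero_le_one
  have hmem : (-Pi.single i 1, 0) ∈ slackCone s := by
    refine ⟨fun j hj => ?_, fun j _ => ?_, le_rfl⟩
    · simp [ne_of_mem_of_not_mem hj hi]
    · exact neg_nonpos.2 (hsingle j)
  have hnonneg := hLC _ hmem
  rw [hθ] at hnonneg
  simpa [Pi.single_apply] using nonneg_of_mul_nonneg_right hnonneg hL

variable {X : Type*} [TopologicalSpace X] {K : Set X} {f : X → ℝ} {a : ι → X → ℝ}
  {b : ι → ℝ} {v : ℝ} {s : Set ι}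

theorem mem_hull_sup_slackCone (hK : IsCompact K) (hf : Continuous f) (ha : ∀ i, Continuous (a i))
    (hmax : ∀ θ : ι → ℝ, (∀ i ∉ s, 0 ≤ θ i) → (∀ x ∈ K, ∑ i, θ i * a i x ≤ f x) →
      ∑ i, θ i * b i ≤ v)
    {θ₀ : ι → ℝ} (hθ₀ : ∀ i ∉ s, 0 ≤ θ₀ i) {ε : ℝ} (hε : 0 < ε)
    (hslater : ∀ x ∈ K, ∑ i, θ₀ i * a i x + ε ≤ f x) :
    (b, v) ∈ PointedCone.hull ℝ ((fun x => ((a · x), f x)) '' K) ⊔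
      (slackCone s : PointedCone ℝ ((ι → ℝ) × ℝ)) := by
  let ℓ : (ι → ℝ) × ℝ →L[ℝ] ℝ := .snd ℝ _ _ -
    ∑ i, θ₀ i • (ContinuousLinearMap.proj i ∘L .fst ℝ (ι → ℝ) ℝ)
  have hℓ : ∀ p, ℓ p = p.2 - ∑ i, θ₀ i * p.1 i := fun p => by
    simp [ℓ]
  refine mem_hull_sup_of_forall_nonneg (hK.image (by fun_prop)) hε (ℓ := ℓ) ?_ (fun p hp => ?_)
    (zero_one_mem_slackCone s) (by simp [hℓ]) fun L hLS hLC hLe => ?_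
  · rintro _ ⟨x, hx, rfl⟩
    rw [hℓ]
    linarith [hslater x hx]
  · have hsum : ∑ i, θ₀ i * p.1 i ≤ 0 := Finset.sum_nonpos fun i _ => by
      by_cases hi : i ∈ s
      · rw [hp.1 i hi, mul_zero]
      · exact mul_nonpos_of_nonneg_of_nonpos (hθ₀ i hi) (hp.2.1 i hi)
    rw [hℓ]
    linarith [hp.2.2]
  · obtain ⟨θ, hθ⟩ := exists_apply_eq_mul_sub_sum L hLe.ne'
    rw [hθ]
    refine mul_nonneg hLe.le (sub_nonneg.2 (hmax θ
      (fun i => multiplier_nonneg_of_slackCone hLC hLe hθ) fun x hx => ?_))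
    have hnonneg := hLS _ ⟨x, hx, rfl⟩
    rw [hθ] at hnonneg
    exact sub_nonneg.1 (nonneg_of_mul_nonneg_right hnonneg hLe)

theorem exists_measure_of_slater [T2Space X] [MeasurableSpace X] [BorelSpace X]
    (hK : IsCompact K) (hf : Continuous f) (ha : ∀ i, Continuous (a i))
    (hmax : ∀ θ : ι → ℝ, (∀ i ∉ s, 0 ≤ θ i) → (∀ x ∈ K, ∑ i, θ i * a i x ≤ f x) →
      ∑ i, θ i * b i ≤ v)
    {θ₀ : ι → ℝ} (hθ₀ : ∀ i ∉ s, 0 ≤ θ₀ i) {ε : ℝ} (hε : 0 < ε)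
    (hslater : ∀ x ∈ K, ∑ i, θ₀ i * a i x + ε ≤ f x) :
    ∃ μ : Measure X, IsFiniteMeasure μ ∧ μ Kᶜ = 0 ∧ (∀ i ∈ s, ∫ x, a i x ∂μ = b i) ∧
      (∀ i ∉ s, b i ≤ ∫ x, a i x ∂μ) ∧ ∫ x, f x ∂μ ≤ v := by
  obtain ⟨_, hp, y, hy, hpy⟩ := Submodule.mem_sup.1
    (mem_hull_sup_slackCone hK hf ha hmax hθ₀ hε hslater)
  have hF : Continuous fun x => ((a · x), f x) := by fun_prop
  obtain ⟨μ, hμ, hμK, rfl⟩ := exists_measure_integral_eq_of_mem_hull hF hK hp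
  have hint := integrable_of_continuous_of_measure_compl_eq_zero hF hK hμK
  have hfst : ∀ i, ∫ x, a i x ∂μ + y.1 i = b i := fun i => by
    have := congrFun (congrArg Prod.fst hpy) i
    rwa [Prod.fst_add, fst_integral hint, Pi.add_apply,
      eval_integral fun i =>
        integrable_of_continuous_of_measure_compl_eq_zero (ha i) hK hμK] at this
  have hsnd : ∫ x, f x ∂μ + y.2 = v := by
    have := congrArg Prod.snd hpy
    rwa [Prod.snd_add, snd_integral hint] at this
  obtain ⟨hy_eq, hy_le, hy_snd⟩ := mem_slackCone.1 hy
  refine ⟨μ, hμ, hμK, fun i hi => ?_, fun i hi => ?_, by linarith⟩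
  · linarith [hfst i, hy_eq i hi]
  · linarith [hfst i, hy_le i hi]

end SemiInfinite

/-! ### Moment sequences and the relaxations -/

section Pairing

variable {n : ℕ} {p q : RPoly n} {y : (Fin n →₀ ℕ) → ℝ} {K : Set (Fin n → ℝ)}
  {μ : Measure (Fin n → ℝ)}

theorem pairing_eq_basisMonomials_constr (p : RPoly n) (y : (Fin n →₀ ℕ) → ℝ) :
    pairing p y = (basisMonomials (Fin n) ℝ).constr ℝ y p :=
  ((basisMonomials (Fin n) ℝ).constr_apply ℝ y p).symm

theorem pairing_add (p q : RPoly n) (y : (Fin n →₀ ℕ) → ℝ) :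
    pairing (p + q) y = pairing p y + pairing q y := by
  simp only [pairing_eq_basisMonomials_constr, map_add]

theorem pairing_sum {ι : Type*} (s : Finset ι) (p : ι → RPoly n) (y : (Fin n →₀ ℕ) → ℝ) :
    pairing (∑ i ∈ s, p i) y = ∑ i ∈ s, pairing (p i) y := by
  simp only [pairing_eq_basisMonomials_constr, map_sum]

theorem pairing_sub_sum_C_mul {ι : Type*} (s : Finset ι) (f : RPoly n) (θ : ι → ℝ)
    (a : ι → RPoly n) (y : (Fin n →₀ ℕ) → ℝ) :
    pairing (f - ∑ i ∈ s, C (θ i) * a i) y = pairing f y - ∑ i ∈ s, θ i * pairing (a i) y := by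
  simp only [pairing_eq_basisMonomials_constr, map_sub, map_sum, ← smul_eq_C_mul, map_smul,
    smul_eq_mul]

theorem mdeg_le_totalDegree {α : Fin n →₀ ℕ} (hα : α ∈ p.support) : mdeg α ≤ p.totalDegree := by
  simpa [mdeg, Finsupp.sum_fintype] using le_totalDegree hα

theorem pairing_eq_integral
    (hy : ∀ α ∈ p.support, Integrable (fun x => ∏ i, x i ^ α i) μ ∧
      y α = ∫ x, (∏ i, x i ^ α i) ∂μ) :
    pairing p y = ∫ x, eval x p ∂μ := by
  simp only [eval_eq', pairing]
  rw [integral_finsetSum _ fun α hα => (hy α hα).1.const_mul _]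
  exact Finset.sum_congr rfl fun α hα => by rw [integral_const_mul, (hy α hα).2]

theorem InMomentCone.pairing_nonneg {d : ℕ} (hy : InMomentCone d K y) (hp : p ∈ PdCone d K) :
    0 ≤ pairing p y := by
  obtain ⟨μ, _, hμK, hμ⟩ := hy
  rw [pairing_eq_integral fun α hα => hμ α ((mdeg_le_totalDegree hα).trans hp.1)]
  refine integral_nonneg_of_ae ?_
  filter_upwards [ae_mem_of_measure_compl_eq_zero hμK] with x hx using hp.2 x hx

/-- The moment sequence `α ↦ ∫ x^α dμ` of a measure. -/
noncomputable def momentSeq (μ : Measure (Fin n → ℝ)) (α : Fin n →₀ ℕ) : ℝ :=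
  ∫ x, (∏ i, x i ^ α i) ∂μ

variable [IsFiniteMeasure μ]

theorem integrable_monomial (hK : IsCompact K) (hμ : μ Kᶜ = 0) (α : Fin n →₀ ℕ) :
    Integrable (fun x => ∏ i, x i ^ α i) μ :=
  integrable_of_continuous_of_measure_compl_eq_zero (by fun_prop) hK hμ

theorem inMomentCone_momentSeq (hK : IsCompact K) (hμ : μ Kᶜ = 0) (d : ℕ) :
    InMomentCone d K (momentSeq μ) :=
  ⟨μ, inferInstance, hμ, fun α _ => ⟨integrable_monomial hK hμ α, rfl⟩⟩

theorem pairing_momentSeq (hK : IsCompact K) (hμ : μ Kᶜ = 0) (p : RPoly n) :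
    pairing p (momentSeq μ) = ∫ x, eval x p ∂μ :=
  pairing_eq_integral fun α _ => ⟨integrable_monomial hK hμ α, rfl⟩

theorem momRelaxPSD_momentSeq {E I : Finset ℕ} {c : ℕ → RPoly n} (hK : IsCompact (Kset E I c))
    (hμ : μ (Kset E I c)ᶜ = 0) (k : ℕ) : MomRelaxPSD E c I c k (momentSeq μ) := by
  have hmem := ae_mem_of_measure_compl_eq_zero hμ
  refine ⟨fun j hj q _ => ?_, fun j hj q _ => ?_, fun q _ => ?_⟩ <;>
    rw [pairing_momentSeq hK hμ]
  · refine integral_eq_zero_of_ae ?_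
    filter_upwards [hmem] with x hx
    simp [hx.1 j hj]
  · refine integral_nonneg_of_ae ?_
    filter_upwards [hmem] with x hx
    rw [map_mul, map_pow]
    exact mul_nonneg (hx.2 j hj) (sq_nonneg _)
  · refine integral_nonneg fun x => ?_
    rw [map_pow]
    exact sq_nonneg _

end Pairing

section Truncation

open Filter

variable {n : ℕ} {E I : Finset ℕ} {c : ℕ → RPoly n} {p : RPoly n}

theorem IsSOS.eventually_pairing_nonneg {σ : RPoly n} (hσ : IsSOS σ) (g : RPoly n) :
    ∀ᶠ t in atTop, ∀ w, (∀ q : RPoly n, q.totalDegree ≤ t → 0 ≤ pairing (g * q ^ 2) w) →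
      0 ≤ pairing (g * σ) w := by
  obtain ⟨L, rfl⟩ := hσ
  induction L with
  | nil => simp [pairing]
  | cons q L ih =>
    filter_upwards [ih, eventually_ge_atTop q.totalDegree] with t ht hqt w hw
    rw [List.map_cons, List.sum_cons, mul_add, pairing_add]
    exact add_nonneg (hw q hqt) (ht w hw)

theorem eventually_pairing_nonneg_of_mem_constraintCone (hp : p ∈ constraintCone E I c) :
    ∀ᶠ k in atTop, ∀ w, MomRelaxPSD E c I c k w → 0 ≤ pairing p w := by
  obtain ⟨_, hp₁, _, ⟨σ₀, σ, hσ₀, hσ, rfl⟩, rfl⟩ := mem_constraintCone.1 hp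
  obtain ⟨q, rfl⟩ := mem_IdealFull_iff.1 hp₁
  have hq : ∀ᶠ k in atTop, ∀ j ∈ E, (q j).totalDegree + (c j).totalDegree ≤ k :=
    (eventually_all_finset E).2 fun j _ => eventually_ge_atTop _
  have hσI : ∀ᶠ k in atTop, ∀ j ∈ I, ∀ w,
      (∀ r : RPoly n, r.totalDegree ≤ k - ((c j).totalDegree + 1) / 2 →
        0 ≤ pairing (c j * r ^ 2) w) → 0 ≤ pairing (c j * σ j) w :=
    (eventually_all_finset I).2 fun j hj =>
      (tendsto_sub_atTop_nat _).eventually ((hσ j hj).eventually_pairing_nonneg (c j))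
  have hI : ∀ᶠ k in atTop, ∀ j ∈ I, ((c j).totalDegree + 1) / 2 ≤ k :=
    (eventually_all_finset I).2 fun j _ => eventually_ge_atTop _
  filter_upwards [hq, hσI, hI, hσ₀.eventually_pairing_nonneg 1] with k hqk hσk hIk hσ₀k w hw
  obtain ⟨hwE, hwI, hwsq⟩ := hw
  rw [pairing_add, pairing_add, pairing_sum, pairing_sum,
    Finset.sum_eq_zero fun j hj => hwE j hj (q j) (by have := hqk j hj; omega), zero_add]
  refine add_nonneg ?_ (Finset.sum_nonneg fun j hj => hσk j hj w fun r hr =>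
    hwI j hj r (by have := hIk j hj; omega))
  simpa only [one_mul] using hσ₀k w (by simpa only [one_mul] using hwsq)

theorem eventually_mem_IdealDeg_add_QModDeg (hp : p ∈ constraintCone E I c) :
    ∀ᶠ k in atTop, ∃ p₁ ∈ IdealDeg E c (2 * k), ∃ p₂ ∈ QModDeg I c (2 * k), p = p₁ + p₂ := by
  obtain ⟨_, hp₁, _, ⟨σ₀, σ, hσ₀, hσ, rfl⟩, rfl⟩ := mem_constraintCone.1 hp
  obtain ⟨q, rfl⟩ := mem_IdealFull_iff.1 hp₁
  have hq : ∀ᶠ k in atTop, ∀ j ∈ E, (q j).totalDegree + (c j).totalDegree ≤ k :=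
    (eventually_all_finset E).2 fun j _ => eventually_ge_atTop _
  have hσI : ∀ᶠ k in atTop, ∀ j ∈ I, (σ j).totalDegree + (c j).totalDegree ≤ k :=
    (eventually_all_finset I).2 fun j _ => eventually_ge_atTop _
  have hdouble : Tendsto (fun k => 2 * k) atTop atTop :=
    tendsto_id.const_mul_atTop' two_pos
  filter_upwards [hdouble.eventually hq, hdouble.eventually hσI,
    hdouble.eventually (eventually_ge_atTop σ₀.totalDegree)] with k hqk hσk hσ₀k
  exact ⟨_, ⟨q, hqk, rfl⟩, _, ⟨σ₀, σ, hσ₀, hσ₀k, fun j hj => ⟨hσ j hj, hσk j hj⟩, rfl⟩, rfl⟩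

theorem add_mem_constraintCone_of_truncated {k : ℕ} {p₁ p₂ : RPoly n} (h₁ : p₁ ∈ IdealDeg E c k)
    (h₂ : p₂ ∈ QModDeg I c k) : p₁ + p₂ ∈ constraintCone E I c := by
  obtain ⟨q, -, rfl⟩ := h₁
  obtain ⟨σ₀, σ, hσ₀, -, hσ, rfl⟩ := h₂
  exact mem_constraintCone.2 ⟨_, mem_IdealFull_iff.2 ⟨q, rfl⟩, _,
    ⟨σ₀, σ, hσ₀, fun j hj => (hσ j hj).1, rfl⟩, rfl⟩

end Truncation

section Values

variable {n m m1 d : ℕ} {f : RPoly n} {a : Fin m → RPoly n} {b θ : Fin m → ℝ}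
  {K : Set (Fin n → ℝ)} {E I : Finset ℕ} {c : ℕ → RPoly n}

theorem totalDegree_sub_sum_C_mul_le (hf : f.totalDegree ≤ d) (ha : ∀ i, (a i).totalDegree ≤ d)
    (θ : Fin m → ℝ) : (f - ∑ i, C (θ i) * a i).totalDegree ≤ d := by
  refine (totalDegree_sub _ _).trans (max_le hf (totalDegree_finsetSum_le fun i _ => ?_))
  rw [← smul_eq_C_mul]
  exact (totalDegree_smul_le _ _).trans (ha i)

theorem exists_pos_le_eval_of_mem_PdInterior {p : RPoly n} (hp : p ∈ PdInterior d K) :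
    ∃ ε > 0, ∀ x ∈ K, ε ≤ eval x p := by
  obtain ⟨hdeg, ε, hε, hball⟩ := hp
  refine ⟨ε, hε, fun x hx => ?_⟩
  have hnonneg := hball (p - C ε)
    ((totalDegree_sub _ _).trans (max_le hdeg (by simp))) (fun α => ?_) x hx
  · rwa [map_sub, eval_C, sub_nonneg] at hnonneg
  · rw [coeff_sub, coeff_C]
    split_ifs <;> simp [abs_of_pos hε, hε.le]

theorem exists_momentSeq_mfeas_of_slater (hK : IsCompact K) (hf : f.totalDegree ≤ d)
    (ha : ∀ i, (a i).totalDegree ≤ d) {v : ℝ}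
    (hmax : ∀ θ, PFeas m1 d f a K θ → ∑ i, b i * θ i ≤ v)
    (hslater : ∃ θ : Fin m → ℝ, (∀ i : Fin m, m1 ≤ (i : ℕ) → 0 ≤ θ i) ∧
      f - ∑ i, C (θ i) * a i ∈ PdInterior d K) :
    ∃ μ : Measure (Fin n → ℝ), IsFiniteMeasure μ ∧ μ Kᶜ = 0 ∧
      MFeas m1 d a b K (momentSeq μ) ∧ pairing f (momentSeq μ) ≤ v := by
  obtain ⟨θ₀, hθ₀, hint⟩ := hslater
  obtain ⟨ε, hε, hle⟩ := exists_pos_le_eval_of_mem_PdInterior hint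
  have heval : ∀ (θ : Fin m → ℝ) x, eval x (f - ∑ i, C (θ i) * a i) =
      eval x f - ∑ i, θ i * eval x (a i) := fun θ x => by simp
  obtain ⟨μ, _, hμK, heq, hge, hfμ⟩ := exists_measure_of_slater (s := {i : Fin m | (i : ℕ) < m1})
    (f := fun x => eval x f) (a := fun i x => eval x (a i)) (b := b) (v := v) (θ₀ := θ₀) hK
    (continuous_eval f) (fun i => continuous_eval (a i))
    (fun θ hθ hθK => by
      simp only [mul_comm (θ _)]
      refine hmax θ ⟨fun i hi => hθ i hi.not_gt, totalDegree_sub_sum_C_mul_le hf ha θ,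
        fun x hx => ?_⟩
      rw [heval]
      exact sub_nonneg.2 (hθK x hx))
    (fun i hi => hθ₀ i (not_lt.1 hi)) hε
    (fun x hx => by linarith [hle x hx, heval θ₀ x])
  refine ⟨μ, inferInstance, hμK, ⟨inMomentCone_momentSeq hK hμK d, fun i hi => ?_, fun i hi => ?_⟩,
    ?_⟩ <;> rw [pairing_momentSeq hK hμK]
  exacts [heq i hi, hge i hi.not_gt, hfμ]

theorem sum_mul_le_pairing {w : (Fin n →₀ ℕ) → ℝ} (hθ : ∀ i : Fin m, m1 ≤ (i : ℕ) → 0 ≤ θ i)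
    (hw : 0 ≤ pairing (f - ∑ i, C (θ i) * a i) w)
    (heq : ∀ i : Fin m, (i : ℕ) < m1 → pairing (a i) w = b i)
    (hge : ∀ i : Fin m, m1 ≤ (i : ℕ) → b i ≤ pairing (a i) w) :
    ∑ i, b i * θ i ≤ pairing f w := by
  rw [pairing_sub_sum_C_mul, sub_nonneg] at hw
  refine le_trans (Finset.sum_le_sum fun i _ => ?_) hw
  rw [mul_comm]
  rcases lt_or_ge (i : ℕ) m1 with hi | hi
  · rw [heq i hi]
  · exact mul_le_mul_of_nonneg_left (hge i hi) (hθ i hi)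

theorem PVal_eq_of_isMax (hθ : PFeas m1 d f a K θ)
    (hmax : ∀ η, PFeas m1 d f a K η → ∑ i, b i * η i ≤ ∑ i, b i * θ i) :
    PVal m1 d f a b K = ∑ i, b i * θ i := by
  refine IsGreatest.csSup_eq ⟨⟨θ, hθ, rfl⟩, ?_⟩
  rintro _ ⟨η, hη, rfl⟩
  exact hmax η hη

theorem MVal_eq_of_pairing_le (hθ : PFeas m1 d f a K θ) {y : (Fin n →₀ ℕ) → ℝ}
    (hy : MFeas m1 d a b K y) (hfy : pairing f y ≤ ∑ i, b i * θ i) :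
    MVal m1 d f a b K = ∑ i, b i * θ i := by
  have hweak : ∀ z, MFeas m1 d a b K z → ∑ i, b i * θ i ≤ pairing f z := fun z hz =>
    sum_mul_le_pairing hθ.1 (hz.1.pairing_nonneg hθ.2) hz.2.1 hz.2.2
  refine IsLeast.csInf_eq ⟨⟨y, hy, (hweak y hy).antisymm hfy⟩, ?_⟩
  rintro _ ⟨z, hz, rfl⟩
  exact hweak z hz

theorem SOSRelaxVal_eq_of_isMax {k : ℕ} (hf : f.totalDegree ≤ d) (ha : ∀ i, (a i).totalDegree ≤ d)
    (hθ : ∀ i : Fin m, m1 ≤ (i : ℕ) → 0 ≤ θ i)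
    (hmax : ∀ η, PFeas m1 d f a (Kset E I c) η → ∑ i, b i * η i ≤ ∑ i, b i * θ i)
    (hcert : ∃ p₁ ∈ IdealDeg E c (2 * k), ∃ p₂ ∈ QModDeg I c (2 * k),
      f - ∑ i, C (θ i) * a i = p₁ + p₂) :
    SOSRelaxVal m1 f a b E c I c k = ∑ i, b i * θ i := by
  refine IsGreatest.csSup_eq ⟨⟨θ, hθ, hcert, rfl⟩, ?_⟩
  rintro _ ⟨η, hη, ⟨p₁, hp₁, p₂, hp₂, hp⟩, rfl⟩
  refine hmax η ⟨hη, totalDegree_sub_sum_C_mul_le hf ha η, fun x hx => ?_⟩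
  rw [hp]
  exact eval_nonneg_of_mem_constraintCone (add_mem_constraintCone_of_truncated hp₁ hp₂) hx

theorem GMomVal_eq_of_pairing_le {k : ℕ} (hθ : ∀ i : Fin m, m1 ≤ (i : ℕ) → 0 ≤ θ i)
    (hcert : ∀ w, MomRelaxPSD E c I c k w → 0 ≤ pairing (f - ∑ i, C (θ i) * a i) w)
    {y : (Fin n →₀ ℕ) → ℝ} (hy : GMomFeas m1 a b E c I c k y)
    (hfy : pairing f y ≤ ∑ i, b i * θ i) :
    GMomVal m1 f a b E c I c k = ∑ i, b i * θ i := by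
  have hweak : ∀ w, GMomFeas m1 a b E c I c k w → ∑ i, b i * θ i ≤ pairing f w := fun w hw =>
    sum_mul_le_pairing hθ (hcert w hw.2.2) hw.1 hw.2.1
  refine IsLeast.csInf_eq ⟨⟨y, hy, (hweak y hy).antisymm hfy⟩, ?_⟩
  rintro _ ⟨w, hw, rfl⟩
  exact hweak w hw

end Values

theorem statement_0_general
    (n m m1 d : ℕ)
    (f : RPoly n) (a : Fin m → RPoly n) (b : Fin m → ℝ)
    (E I : Finset ℕ) (c : ℕ → RPoly n)
    (hf : f.totalDegree ≤ d) (ha : ∀ i, (a i).totalDegree ≤ d)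
    (harch : ArchimedeanQM E I c)
    (θs : Fin m → ℝ) (hθfeas : PFeas m1 d f a (Kset E I c) θs)
    (hθmax : ∀ θ : Fin m → ℝ, PFeas m1 d f a (Kset E I c) θ →
      (∑ i, b i * θ i) ≤ ∑ i, b i * θs i)
    (hslater : ∃ θ : Fin m → ℝ, (∀ i : Fin m, m1 ≤ (i : ℕ) → 0 ≤ θ i) ∧
      (f - ∑ i, C (θ i) * a i) ∈ PdInterior d (Kset E I c))
    (hKKT : ∀ u ∈ Kset E I c, eval u (f - ∑ i, C (θs i) * a i) = 0 →
      ∃ lamE lamI, IsStrictKKT E I c (f - ∑ i, C (θs i) * a i) u lamE lamI) :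
    ∃ k0 : ℕ, ∀ k : ℕ, k0 ≤ k →
      SOSRelaxVal m1 f a b E c I c k = PVal m1 d f a b (Kset E I c) ∧
      GMomVal m1 f a b E c I c k = PVal m1 d f a b (Kset E I c) ∧
      MVal m1 d f a b (Kset E I c) = PVal m1 d f a b (Kset E I c) := by
  have hK := harch.isCompact_Kset
  have hmem := mem_constraintCone_of_isStrictKKT harch hθfeas.2.2 hKKT
  obtain ⟨μ, _, hμK, hμ, hfμ⟩ := exists_momentSeq_mfeas_of_slater hK hf ha hθmax hslater
  rw [PVal_eq_of_isMax hθfeas hθmax, ← Filter.eventually_atTop]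
  filter_upwards [eventually_mem_IdealDeg_add_QModDeg hmem,
    eventually_pairing_nonneg_of_mem_constraintCone hmem] with k hsos hmom
  exact ⟨SOSRelaxVal_eq_of_isMax hf ha hθfeas.1 hθmax hsos,
    GMomVal_eq_of_pairing_le hθfeas.1 hmom ⟨hμ.2.1, hμ.2.2, momRelaxPSD_momentSeq hK hμK k⟩ hfμ,
    MVal_eq_of_pairing_le hθfeas hμ hfμ⟩

/-- Theorem 3.2(i): under archimedeanness, Assumption A, and the
optimality conditions at every global minimizer of (Q), the Moment-SOS hierarchy for
the pair (P)-(M) has finite convergence. -/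
theorem statement_0
    (n m m1 d : ℕ) (hm1 : m1 ≤ m)
    (f : RPoly n) (a : Fin m → RPoly n) (b : Fin m → ℝ)
    (E I : Finset ℕ) (hEI : Disjoint E I) (c : ℕ → RPoly n)
    (hf : f.totalDegree ≤ d) (ha : ∀ i, (a i).totalDegree ≤ d)
    -- archimedeanness of Ideal(c_eq) + QM(c_in)
    (harch : ArchimedeanQM E I c)
    -- Assumption A: θ* is a maximizer of (P)
    (θs : Fin m → ℝ) (hθfeas : PFeas m1 d f a (Kset E I c) θs)
    (hθmax : ∀ θ : Fin m → ℝ, PFeas m1 d f a (Kset E I c) θ →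
      (∑ i, b i * θ i) ≤ ∑ i, b i * θs i)
    -- Assumption A: (M) has a minimizer y* ≠ 0
    (ys : (Fin n →₀ ℕ) → ℝ) (hyfeas : MFeas m1 d a b (Kset E I c) ys)
    (hymin : ∀ y : (Fin n →₀ ℕ) → ℝ, MFeas m1 d a b (Kset E I c) y →
      pairing f ys ≤ pairing f y)
    (hynz : ∃ α : Fin n →₀ ℕ, mdeg α ≤ d ∧ ys α ≠ 0)
    -- Assumption A: Slater condition for (P)
    (hslater : ∃ θ : Fin m → ℝ, (∀ i : Fin m, m1 ≤ (i : ℕ) → 0 ≤ θ i) ∧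
      (f - ∑ i, C (θ i) * a i) ∈ PdInterior d (Kset E I c))
    -- LICQC, SCC, SOSC at every global minimizer of (Q)
    (hopt : ∀ u : Fin n → ℝ,
      (u ∈ Kset E I c ∧ ∀ x ∈ Kset E I c,
        eval u (f - ∑ i, C (θs i) * a i) ≤ eval x (f - ∑ i, C (θs i) * a i)) →
      OptCondsAt E c I c (f - ∑ i, C (θs i) * a i) u) :
    ∃ k0 : ℕ, ∀ k : ℕ, k0 ≤ k →
      SOSRelaxVal m1 f a b E c I c k = PVal m1 d f a b (Kset E I c) ∧
      GMomVal m1 f a b E c I c k = PVal m1 d f a b (Kset E I c) ∧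
      MVal m1 d f a b (Kset E I c) = PVal m1 d f a b (Kset E I c) := by
  exact statement_0_general n m m1 d f a b E I c hf ha harch θs hθfeas hθmax hslater fun u hu h0 =>
    (hopt u ⟨hu, fun x hx => h0.trans_le (hθfeas.2.2 x hx)⟩).exists_isStrictKKT
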